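/- arXiv:1302.0556 — 2 statements merged into one kernel-verified Lean document; each statement's English description precedes it below -/
import Mathlib

section
/- Let $M$ be a compact smooth manifold with a symplectic form $\omega$, and let a group $G$ act on $M$ by diffeomorphisms (for instance a compact connected Lie group acting in a hamiltonian way). Let $\mathcal{J}^G$ be the space of $G$-invariant almost complex structures on $M$ compatible with $\omega$. A map $F$ from an open subset $U$ of a complex normed vector space to $\mathcal{J}^G$ is called holomorphic if it is smooth (that is, $(p,x)\mapsto F(x)_p$ is smooth on $M\times U$) and $dF_x(i h)=F(x)\circ dF_x(h)$ for all $x\in U$ and all $h$. For an almost complex structure $J$ let $$N_J(X,Y)=\tfrac14\left([JX,JY]-J[JX,Y]-J[X,JY]-[X,Y]\right)$$ be its Nijenhuis tensor, let $(\mathcal{L}_XJ)Y=[X,JY]-J[X,Y]$, and call $J$ integrable if $N_J=0$. For a disk $\Delta\subseteq\mathbb{C}$ and a map $F:\Delta\to\mathcal{J}^G$, let $J$ be the field of endomorphisms of the tangent spaces of $M\times\Delta$ given by the standard complex structure on the $\Delta$-directions and by $J_z=F(z)$ on the fibre $M\times\{z\}$. (1) Let $\Delta$ be an open disk with centre $c$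 and let $F:\Delta\to\mathcal{J}^G$ be a holomorphic map such that $F(z)$ is integrable for every $z\in\Delta\setminus\{c\}$. Then $J$ is a smooth almost complex structure on $M\times\Delta$ and is integrable, i.e. $N_J=0$. In particular, for $X$ tangent to $\Delta$ and $Y$ tangent to $M$, $$N_J(X,Y)=\tfrac14\left((\mathcal{L}_{JX}J)Y-J(\mathcal{L}_XJ)Y\right)=0 .$$ (2) Let a group $K^{\mathbb{C}}$ act complex linearly on a finite-dimensional complex normed space $H$, let $B\subseteq H$ be an open ball centred at $0$, and let $\Phi_1:B\to\mathcal{J}^G$ be holomorphic and $K^{\mathbb{C}}$-equivariant in the following sense: if $y,y'\in B$ lie in the same $K^{\mathbb{C}}$-orbit and $\Phi_1(y)$ is integrable, then $\Phi_1(y')$ lies on the complexified orbit of $\Phi_1(y)$, i.e. there are a $G$-equivariant diffeomorphism $f$ of $M$ and a smooth $G$-invariant function $\psi:M\to\mathbb{R}$ such that $f$ pulls back the pair $(\omega,\Phi_1(y'))$ to $(\omega+i\partial\bar\partial\psi,\Phi_1(y))$. Let $x\in B$ be such that $\Phi_1(x)$ is integrable, and let $\rho:\mathbb{C}^*\to K^{\mathbb{C}}$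 be a one-parameter subgroup such that $z\mapsto\rho(z)\cdot x$ is holomorphic on $\mathbb{C}^*$ and has a limit $x_0$ as $z\to0$; put $\rho(0)\cdot x:=x_0$. Let $\Delta$ be an open disk of radius $\delta>0$ centred at $0$ with $\rho(z)\cdot x\in B$ for all $z\in\Delta$. Then $F:\Delta\to\mathcal{J}^G$, $F(z)=\Phi_1(\rho(z)\cdot x)$, is holomorphic, and all the conclusions of (1) hold for $F$. -/
open Set Filter Topology Bundle VectorField TopologicalSpace
open scoped Manifold ContDiff

namespace ProductACS

noncomputable section

section General

variable {V : Type*} [NormedAddCommGroup V] [NormedSpace ℝ V]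
  {A : Type*} [TopologicalSpace A] (I : ModelWithCorners ℝ V A)
  {N : Type*} [TopologicalSpace N] [ChartedSpace A N] [IsManifold I ∞ N]

/-- `X` is smooth near `p`, as a section of the tangent bundle. -/
def SmoothFieldAt (X : (p : N) → TangentSpace I p) (p : N) : Prop :=
  ContMDiffAt I I.tangent ∞ (fun q => (⟨q, X q⟩ : TangentBundle I N)) p

/-- Fields of (continuous, real-linear) endomorphisms of the tangent spaces. -/
abbrev EndField (N : Type*) [TopologicalSpace N] [ChartedSpace A N] : Type _ :=
  (p : N) → (TangentSpace I p →L[ℝ] TangentSpace I p)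

/-- Almost complex structures: smooth sections `J` of `End(TN)` with `J² = -1`. -/
structure IsAlmostComplex (J : EndField I N) : Prop where
  smooth : ContMDiff I (I.prod 𝓘(ℝ, V →L[ℝ] V)) ∞
    (fun p => TotalSpace.mk' (V →L[ℝ] V)
      (E := fun p : N => TangentSpace I p →L[ℝ] TangentSpace I p) p (J p))
  sq : ∀ (p : N) (v : TangentSpace I p), J p (J p v) = -v

/-- The field `J X`. -/
def applyField (J : EndField I N) (X : (p : N) → TangentSpace I p) :
    (p : N) → TangentSpace I p :=
  fun p => J p (X p)

/-- The Lie derivative of an endomorphism field: `(ℒ_X J) Y = [X, J Y] - J [X, Y]`. -/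
def lieDerivEnd (J : EndField I N) (X Y : (p : N) → TangentSpace I p) (p : N) :
    TangentSpace I p :=
  mlieBracket I X (applyField I J Y) p - J p (mlieBracket I X Y p)

/-- The Nijenhuis tensor
`N_J(X, Y) = (1/4) ([JX, JY] - J [JX, Y] - J [X, JY] - [X, Y])`. -/
def nijenhuis (J : EndField I N) (X Y : (p : N) → TangentSpace I p) (p : N) :
    TangentSpace I p :=
  (1 / 4 : ℝ) • (mlieBracket I (applyField I J X) (applyField I J Y) p
    - J p (mlieBracket I (applyField I J X) Y p)
    - J p (mlieBracket I X (applyField I J Y) p)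
    - mlieBracket I X Y p)

/-- An almost complex structure is integrable when its Nijenhuis tensor vanishes. -/
structure IsIntegrable (J : EndField I N) : Prop where
  isAlmostComplex : IsAlmostComplex I J
  nijenhuis_eq_zero : ∀ (p : N) (X Y : (p : N) → TangentSpace I p),
    SmoothFieldAt I X p → SmoothFieldAt I Y p → nijenhuis I J X Y p = 0

/-- The derivative `X f` of a function along a vector field. -/
def dirDeriv (X : (p : N) → TangentSpace I p) (f : N → ℝ) (p : N) : ℝ :=
  (mfderiv I 𝓘(ℝ, ℝ) f p : V →L[ℝ] ℝ) (X p)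

/-- Fields of bilinear forms on the tangent spaces. -/
abbrev FormField (N : Type*) [TopologicalSpace N] [ChartedSpace A N] : Type _ :=
  (p : N) → (TangentSpace I p →L[ℝ] TangentSpace I p →L[ℝ] ℝ)

/-- Symplectic forms: smooth, alternating, non-degenerate, closed 2-forms. -/
structure IsSymplectic (σ : FormField I N) : Prop where
  smooth : ContMDiff I (I.prod 𝓘(ℝ, V →L[ℝ] V →L[ℝ] ℝ)) ∞
    (fun p => TotalSpace.mk' (V →L[ℝ] V →L[ℝ] ℝ)
      (E := fun p : N => TangentSpace I p →L[ℝ] TangentSpace I p →L[ℝ] ℝ) p (σ p))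
  alternating : ∀ (p : N) (v : TangentSpace I p), σ p v v = 0
  nondegenerate : ∀ (p : N) (v : TangentSpace I p), (∀ w, σ p v w = 0) → v = 0
  closed : ∀ (p : N) (X Y Z : (p : N) → TangentSpace I p),
    SmoothFieldAt I X p → SmoothFieldAt I Y p → SmoothFieldAt I Z p →
    dirDeriv I X (fun q => σ q (Y q) (Z q)) p
      - dirDeriv I Y (fun q => σ q (X q) (Z q)) p
      + dirDeriv I Z (fun q => σ q (X q) (Y q)) p
      - σ p (mlieBracket I X Y p) (Z p)
      + σ p (mlieBracket I X Z p) (Y p)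
      - σ p (mlieBracket I Y Z p) (X p) = 0

/-- The space `𝒥^G` of `G`-invariant almost complex structures compatible with `σ`. -/
structure IsInvariantCompatible (σ : FormField I N) (G : Type*) [Group G] [MulAction G N]
    (J : EndField I N) : Prop where
  isAlmostComplex : IsAlmostComplex I J
  preserves : ∀ (p : N) (v w : TangentSpace I p), σ p (J p v) (J p w) = σ p v w
  positive : ∀ (p : N) (v : TangentSpace I p), v ≠ 0 → 0 < σ p v (J p v)
  invariant : ∀ (g : G) (p : N) (v : TangentSpace I p),
    mfderiv I I (fun q : N => g • q) p (J p v)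
      = J (g • p) (mfderiv I I (fun q : N => g • q) p v)

/-- The 2-form `i ∂ ∂bar ψ = -(1/2) d(dψ ∘ J)`, where
`dθ(X, Y) = X (θ Y) - Y (θ X) - θ [X, Y]`. -/
def iddbar (J : EndField I N) (ψ : N → ℝ) (X Y : (p : N) → TangentSpace I p) (p : N) : ℝ :=
  -(1 / 2 : ℝ) * (dirDeriv I X (fun q => dirDeriv I (applyField I J Y) ψ q) p
    - dirDeriv I Y (fun q => dirDeriv I (applyField I J X) ψ q) p
    - dirDeriv I (applyField I J (mlieBracket I X Y)) ψ p)

/-- `J'` lies on the complexified orbit of `J` (for `J` integrable, under the group of hamiltonian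
diffeomorphisms commuting with `G`): a `G`-equivariant diffeomorphism `f` pulls the pair `(σ, J')`
back to `(σ + i ∂ ∂bar ψ, J)`, for some smooth `G`-invariant function `ψ`. -/
def OnComplexifiedOrbit (σ : FormField I N) (G : Type*) [Group G] [MulAction G N]
    (J J' : EndField I N) : Prop :=
  ∃ (f : N ≃ₘ^∞⟮I, I⟯ N) (ψ : N → ℝ),
    (∀ (g : G) (p : N), f (g • p) = g • f p) ∧
    ContMDiff I 𝓘(ℝ, ℝ) ∞ ψ ∧ (∀ (g : G) (p : N), ψ (g • p) = ψ p) ∧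
    (∀ (p : N) (v : TangentSpace I p),
      mfderiv I I f p (J p v) = J' (f p) (mfderiv I I f p v)) ∧
    (∀ (p : N) (X Y : (p : N) → TangentSpace I p), SmoothFieldAt I X p → SmoothFieldAt I Y p →
      σ (f p) (mfderiv I I f p (X p)) (mfderiv I I f p (Y p))
        = σ p (X p) (Y p) + iddbar I J ψ X Y p)

/-- Holomorphy on `U` of a map `F` from a complex normed space `W` to `𝒥^G`.
The map is smooth, that is, `(p, x) ↦ F(x)_p` is smooth on `N × U`, and its differential is complex
linear: on `T_J 𝒥^G`, identified with endomorphism fields `α` anticommuting with `J`, multiplication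
by `i` on the values in `T^{1,0}` is `α ↦ J ∘ α`, so that the condition is
`dF_x(i h) = F(x) ∘ dF_x(h)`. -/
structure IsHolomorphicOn {W : Type*} [NormedAddCommGroup W] [NormedSpace ℂ W]
    (F : W → EndField I N) (U : Set W) : Prop where
  smooth : ContMDiffOn (I.prod 𝓘(ℝ, W)) (I.prod 𝓘(ℝ, V →L[ℝ] V)) ∞
    (fun q : N × W => TotalSpace.mk' (V →L[ℝ] V)
      (E := fun p : N => TangentSpace I p →L[ℝ] TangentSpace I p) q.1 (F q.2 q.1))
    (univ ×ˢ U)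
  complexLinear : ∀ x ∈ U, ∀ (p : N) (h : W),
    fderiv ℝ (fun y => (F y p : V →L[ℝ] V)) x (Complex.I • h)
      = (F x p : V →L[ℝ] V) ∘L fderiv ℝ (fun y => (F y p : V →L[ℝ] V)) x h

end General

section Product

variable {V : Type*} [NormedAddCommGroup V] [NormedSpace ℝ V]
  {M : Type*} [TopologicalSpace M] [ChartedSpace V M]

/-- The open disk of radius `δ` about `c`, as an open submanifold of `ℂ`. -/
def disk (c : ℂ) (δ : ℝ) : Opens ℂ := ⟨Metric.ball c δ, Metric.isOpen_ball⟩

/-- The model of `M × Δ`, a manifold with tangent spaces `T_pM × ℂ`. -/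
abbrev prodModel (V : Type*) [NormedAddCommGroup V] [NormedSpace ℝ V] :
    ModelWithCorners ℝ (V × ℂ) (ModelProd V ℂ) :=
  𝓘(ℝ, V).prod 𝓘(ℝ, ℂ)

/-- The endomorphism field `(v, w) ↦ (F(z)_p v, i w)` on `M × Δ`, at `(p, z)`. -/
def productStructure (F : ℂ → EndField 𝓘(ℝ, V) M) (Δ : Opens ℂ) :
    EndField (prodModel V) (M × Δ) :=
  fun q => ((F (q.2 : ℂ) q.1 : V →L[ℝ] V).prodMap
    (Complex.I • ContinuousLinearMap.id ℝ ℂ : ℂ →L[ℝ] ℂ) : V × ℂ →L[ℝ] V × ℂ)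

/-- `X` is tangent to the factor `Δ`. -/
def TangentToBase {Δ : Opens ℂ} (X : (q : M × Δ) → TangentSpace (prodModel V) q) : Prop :=
  ∀ q, (X q : V × ℂ).1 = 0

/-- `Y` is tangent to the factor `M`. -/
def TangentToFibre {Δ : Opens ℂ} (Y : (q : M × Δ) → TangentSpace (prodModel V) q) : Prop :=
  ∀ q, (Y q : V × ℂ).2 = 0

/-- The product structure `J` is an integrable almost complex structure on `M × Δ`, and
`N_J(X, Y) = (1/4) ((ℒ_{JX} J) Y - J (ℒ_X J) Y) = 0` for `X` tangent to `Δ`, `Y` tangent to `M`. -/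
def ProductIsIntegrable [IsManifold 𝓘(ℝ, V) ∞ M] (F : ℂ → EndField 𝓘(ℝ, V) M)
    (Δ : Opens ℂ) : Prop :=
  IsIntegrable (prodModel V) (productStructure F Δ) ∧
  ∀ (q : M × Δ) (X Y : (q : M × Δ) → TangentSpace (prodModel V) q),
    SmoothFieldAt (prodModel V) X q → SmoothFieldAt (prodModel V) Y q →
    TangentToBase X → TangentToFibre Y →
    nijenhuis (prodModel V) (productStructure F Δ) X Y q
        = (1 / 4 : ℝ) • (lieDerivEnd (prodModel V) (productStructure F Δ)
              (applyField (prodModel V) (productStructure F Δ) X) Y q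
            - productStructure F Δ q
              (lieDerivEnd (prodModel V) (productStructure F Δ) X Y q)) ∧
      (1 / 4 : ℝ) • (lieDerivEnd (prodModel V) (productStructure F Δ)
              (applyField (prodModel V) (productStructure F Δ) X) Y q
            - productStructure F Δ q
              (lieDerivEnd (prodModel V) (productStructure F Δ) X Y q)) = 0

end Product

end

end ProductACS

open ProductACS

namespace ProductACS

noncomputable section

section Local

/-- The value of the Nijenhuis bracket of an endomorphism field on a vector space, in terms of the
value `j` and the differential `d` of the field at a point. -/
def nijForm {E : Type*} [NormedAddCommGroup E] [NormedSpace ℝ E]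
    (j : E →L[ℝ] E) (d : E →L[ℝ] E →L[ℝ] E) (x y : E) : E :=
  d (j x) y - d (j y) x + j (d y x) - j (d x y)

theorem lieBracket_nijenhuis_eq_nijForm {E : Type*} [NormedAddCommGroup E] [NormedSpace ℝ E]
    {J : E → E →L[ℝ] E} {X Y : E → E} {u : E} (hJ : DifferentiableAt ℝ J u)
    (hX : DifferentiableAt ℝ X u) (hY : DifferentiableAt ℝ Y u)
    (hsq : ∀ v, J u (J u v) = -v) :
    lieBracket ℝ (fun w => J w (X w)) (fun w => J w (Y w)) u
      - J u (lieBracket ℝ (fun w => J w (X w)) Y u)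
      - J u (lieBracket ℝ X (fun w => J w (Y w)) u)
      - lieBracket ℝ X Y u = nijForm (J u) (fderiv ℝ J u) (X u) (Y u) := by
  simp only [lieBracket, nijForm, fderiv_clm_apply hJ hX, fderiv_clm_apply hJ hY,
    add_apply, ContinuousLinearMap.comp_apply,
    ContinuousLinearMap.flip_apply, map_sub, map_add, hsq]
  abel

variable {V : Type*} [NormedAddCommGroup V] [NormedSpace ℝ V]
  {A : Type*} [TopologicalSpace A] (I : ModelWithCorners ℝ V A)
  {N : Type*} [TopologicalSpace N] [ChartedSpace A N] [IsManifold I ∞ N]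

/-- The endomorphism `j` of the tangent space at `q`, in the coordinates given by the preferred chart at `x₀`. -/
def coordEnd (x₀ q : N) (j : V →L[ℝ] V) : V →L[ℝ] V :=
  tangentCoordChange I q x₀ q ∘L j ∘L tangentCoordChange I x₀ q q

variable {I}

theorem coordEnd_self (x₀ : N) (j : V →L[ℝ] V) : coordEnd I x₀ x₀ j = j := by
  ext v
  have h : x₀ ∈ (extChartAt I x₀).source := mem_extChartAt_source x₀
  simp only [coordEnd, ContinuousLinearMap.comp_apply, tangentCoordChange_self h]

theorem inCoordinates_eq_coordEnd {x₀ q : N} (hq : q ∈ (chartAt A x₀).source)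
    (j : TangentSpace I q →L[ℝ] TangentSpace I q) :
    ContinuousLinearMap.inCoordinates V (TangentSpace I) V (TangentSpace I) x₀ q x₀ q j
      = coordEnd I x₀ q j := by
  rw [ContinuousLinearMap.inCoordinates,
    TangentBundle.continuousLinearMapAt_trivializationAt_eq_core hq,
    TangentBundle.symmL_trivializationAt_eq_core hq]
  rfl

/-- Smoothness of a family of endomorphisms of tangent spaces, in coordinates. -/
theorem contMDiffAt_end_iff {E' : Type*} [NormedAddCommGroup E'] [NormedSpace ℝ E']
    {A' : Type*} [TopologicalSpace A'] {I' : ModelWithCorners ℝ E' A'}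
    {P : Type*} [TopologicalSpace P] [ChartedSpace A' P]
    {b : P → N} {x : P} (hb : ContMDiffAt I' I ∞ b x)
    (j : (t : P) → (TangentSpace I (b t) →L[ℝ] TangentSpace I (b t))) :
    ContMDiffAt I' (I.prod 𝓘(ℝ, V →L[ℝ] V)) ∞
      (fun t => TotalSpace.mk' (V →L[ℝ] V)
        (E := fun p : N => TangentSpace I p →L[ℝ] TangentSpace I p) (b t) (j t)) x ↔
    ContMDiffAt I' 𝓘(ℝ, V →L[ℝ] V) ∞ (fun t => coordEnd I (b x) (b t) (j t)) x := by
  rw [contMDiffAt_hom_bundle]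
  have key : (fun t => ContinuousLinearMap.inCoordinates V (TangentSpace I) V (TangentSpace I)
      (b x) (b t) (b x) (b t) (j t)) =ᶠ[𝓝 x] fun t => coordEnd I (b x) (b t) (j t) := by
    filter_upwards [hb.continuousAt.preimage_mem_nhds
      ((chartAt A (b x)).open_source.mem_nhds (mem_chart_source A (b x)))] with t ht
    exact inCoordinates_eq_coordEnd ht (j t)
  exact ⟨fun h => h.2.congr_of_eventuallyEq key.symm,
    fun h => ⟨hb, h.congr_of_eventuallyEq key⟩⟩

/-- A vector field in the coordinates given by the preferred chart at `x₀`. -/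
def coordField (I : ModelWithCorners ℝ V A) (x₀ : N) (X : (p : N) → TangentSpace I p) : V → V :=
  mpullbackWithin 𝓘(ℝ, V) I (extChartAt I x₀).symm X (range I)

/-- An endomorphism field in the coordinates given by the preferred chart at `x₀`. -/
def coordEndField (I : ModelWithCorners ℝ V A) [IsManifold I ∞ N] (x₀ : N) (J : EndField I N) :
    V → V →L[ℝ] V :=
  fun u => coordEnd I x₀ ((extChartAt I x₀).symm u) (J ((extChartAt I x₀).symm u))

theorem coordField_eq_tangentCoordChange {x₀ q : N}
    (hq : q ∈ (chartAt A x₀).source) (X : (p : N) → TangentSpace I p) :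
    coordField I x₀ X (extChartAt I x₀ q) = tangentCoordChange I q x₀ q (X q) := by
  have hq' : q ∈ (extChartAt I x₀).source := by rwa [extChartAt_source]
  have e : (extChartAt I x₀).symm (extChartAt I x₀ q) = q := (extChartAt I x₀).left_inv hq'
  have h1 : (mfderivWithin 𝓘(ℝ, V) I (extChartAt I x₀).symm (range I)
      (extChartAt I x₀ q) : V →L[ℝ] V) = tangentCoordChange I x₀ q q :=
    (TangentBundle.symmL_trivializationAt (I := I) hq).symm.trans
      (TangentBundle.symmL_trivializationAt_eq_core hq)
  have hs : q ∈ (extChartAt I q).source := mem_extChartAt_source q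
  have h2 : (tangentCoordChange I x₀ q q).inverse = tangentCoordChange I q x₀ q := by
    apply ContinuousLinearMap.inverse_eq
    · ext v
      exact (tangentCoordChange_comp ⟨⟨hs, hq'⟩, hs⟩).trans (tangentCoordChange_self hs)
    · ext v
      exact (tangentCoordChange_comp ⟨⟨hq', hs⟩, hq'⟩).trans (tangentCoordChange_self hq')
  have h3 : coordField I x₀ X (extChartAt I x₀ q) =
      ((tangentCoordChange I x₀ q q).inverse : V →L[ℝ] V) (X q) := by
    rw [← h1]
    exact congrArg (fun p => (mfderivWithin 𝓘(ℝ, V) I (extChartAt I x₀).symm (range I)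
      (extChartAt I x₀ q) : V →L[ℝ] V).inverse (X p : V)) e
  rw [h3, h2]

theorem coordField_self (x₀ : N) (X : (p : N) → TangentSpace I p) :
    coordField I x₀ X (extChartAt I x₀ x₀) = X x₀ := by
  rw [coordField_eq_tangentCoordChange (mem_chart_source A x₀)]
  exact tangentCoordChange_self (mem_extChartAt_source x₀)

theorem coordEndField_self (x₀ : N) (J : EndField I N) :
    coordEndField I x₀ J (extChartAt I x₀ x₀) = J x₀ := by
  rw [coordEndField, extChartAt_to_inv]
  exact coordEnd_self x₀ _

theorem coordField_applyField {x₀ : N} {u : V} (hu : u ∈ (extChartAt I x₀).target)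
    (J : EndField I N) (X : (p : N) → TangentSpace I p) :
    coordField I x₀ (applyField I J X) u = coordEndField I x₀ J u (coordField I x₀ X u) := by
  obtain ⟨q, hq, rfl⟩ : ∃ q ∈ (extChartAt I x₀).source, extChartAt I x₀ q = u :=
    ⟨_, (extChartAt I x₀).map_target hu, (extChartAt I x₀).right_inv hu⟩
  have hq' : q ∈ (chartAt A x₀).source := by rwa [extChartAt_source] at hq
  have hs : q ∈ (extChartAt I q).source := mem_extChartAt_source q
  rw [coordField_eq_tangentCoordChange hq', coordField_eq_tangentCoordChange hq',
    coordEndField, (extChartAt I x₀).left_inv hq]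
  have h : tangentCoordChange I x₀ q q (tangentCoordChange I q x₀ q (X q)) = X q :=
    (tangentCoordChange_comp ⟨⟨hs, hq⟩, hs⟩).trans (tangentCoordChange_self hs)
  exact (congrArg (fun v : V => tangentCoordChange I q x₀ q ((J q : V →L[ℝ] V) v)) h).symm

theorem mlieBracket_eq_lieBracket_coordField [I.Boundaryless] (x₀ : N)
    (X Y : (p : N) → TangentSpace I p) :
    mlieBracket I X Y x₀ =
      lieBracket ℝ (coordField I x₀ X) (coordField I x₀ Y) (extChartAt I x₀ x₀) := by
  have h1 : (mfderiv I 𝓘(ℝ, V) (extChartAt I x₀) x₀ : V →L[ℝ] V) = ContinuousLinearMap.id ℝ V :=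
    mfderiv_extChartAt_self
  have h2 : (extChartAt I x₀).symm ⁻¹' univ ∩ range I = univ := by simp [I.range_eq_univ]
  have h3 : mlieBracket I X Y x₀ = (mfderiv I 𝓘(ℝ, V) (extChartAt I x₀) x₀ : V →L[ℝ] V).inverse
      (lieBracketWithin (E := V) ℝ (coordField I x₀ X) (coordField I x₀ Y)
        ((extChartAt I x₀).symm ⁻¹' univ ∩ range I) (extChartAt I x₀ x₀)) := by
    rw [← mlieBracketWithin_univ, mlieBracketWithin_apply]
    rfl
  rw [h3, h2, h1, lieBracketWithin_univ]
  exact congrArg (fun L : V →L[ℝ] V => L _) ContinuousLinearMap.inverse_id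

theorem SmoothFieldAt.differentiableAt_coordField [CompleteSpace V] [I.Boundaryless] {x₀ : N}
    {X : (p : N) → TangentSpace I p} (hX : SmoothFieldAt I X x₀) :
    DifferentiableAt ℝ (coordField I x₀ X) (extChartAt I x₀ x₀) := by
  have h : MDifferentiableWithinAt I I.tangent (fun q => (⟨q, X q⟩ : TangentBundle I N)) univ x₀ :=
    (hX.mdifferentiableAt (by simp)).mdifferentiableWithinAt
  have h2 : (extChartAt I x₀).symm ⁻¹' univ ∩ range I = univ := by simp [I.range_eq_univ]
  have h3 : DifferentiableWithinAt ℝ (coordField I x₀ X)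
      ((extChartAt I x₀).symm ⁻¹' univ ∩ range I) (extChartAt I x₀ x₀) :=
    h.differentiableWithinAt_mpullbackWithin_vectorField
  rwa [h2, differentiableWithinAt_univ] at h3

/-- The Nijenhuis tensor in coordinates. -/
theorem nijenhuis_eq_nijForm [CompleteSpace V] [I.Boundaryless] {x₀ : N} {J : EndField I N}
    {X Y : (p : N) → TangentSpace I p}
    (hJ : DifferentiableAt ℝ (coordEndField I x₀ J) (extChartAt I x₀ x₀))
    (hsq : ∀ v : TangentSpace I x₀, J x₀ (J x₀ v) = -v)
    (hX : SmoothFieldAt I X x₀) (hY : SmoothFieldAt I Y x₀)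
    {x y : V} (hx : X x₀ = x) (hy : Y x₀ = y) :
    nijenhuis I J X Y x₀ = ((1 / 4 : ℝ) • nijForm (E := V) (J x₀)
      (fderiv ℝ (coordEndField I x₀ J) (extChartAt I x₀ x₀)) x y : V) := by
  have ev : ∀ Z : (p : N) → TangentSpace I p, coordField I x₀ (applyField I J Z)
      =ᶠ[𝓝 (extChartAt I x₀ x₀)] fun w => coordEndField I x₀ J w (coordField I x₀ Z w) := by
    intro Z
    filter_upwards [extChartAt_target_mem_nhds (I := I) x₀] with u hu
    exact coordField_applyField hu J Z
  have hsq' : ∀ v : V, coordEndField I x₀ J (extChartAt I x₀ x₀)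
      (coordEndField I x₀ J (extChartAt I x₀ x₀) v) = -v := by
    rw [coordEndField_self]; exact hsq
  have key := lieBracket_nijenhuis_eq_nijForm hJ hX.differentiableAt_coordField
    hY.differentiableAt_coordField hsq'
  subst hx hy
  rw [coordEndField_self, coordField_self, coordField_self] at key
  rw [← key]
  simp only [nijenhuis, mlieBracket_eq_lieBracket_coordField]
  rw [(ev X).lieBracket_vectorField_eq (ev Y), (ev X).lieBracket_vectorField_eq (.refl _ _),
    (EventuallyEq.refl _ _).lieBracket_vectorField_eq (ev Y)]
  rfl

theorem exists_smoothFieldAt (x₀ : N) (v : TangentSpace I x₀) :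
    ∃ X : (p : N) → TangentSpace I p, SmoothFieldAt I X x₀ ∧ X x₀ = v :=
  ⟨FiberBundle.extend V v, FiberBundle.contMDiffAt_extend I V v,
    FiberBundle.extend_apply_self V v⟩

/-- The Nijenhuis form of an integrable structure vanishes in coordinates. -/
theorem IsIntegrable.nijForm_eq_zero [CompleteSpace V] [I.Boundaryless] {J : EndField I N}
    (h : IsIntegrable I J) {x₀ : N}
    (hJ : DifferentiableAt ℝ (coordEndField I x₀ J) (extChartAt I x₀ x₀)) (x y : V) :
    nijForm (E := V) (J x₀) (fderiv ℝ (coordEndField I x₀ J) (extChartAt I x₀ x₀)) x y = 0 := by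
  obtain ⟨X, hX, hXx⟩ := exists_smoothFieldAt (I := I) x₀ x
  obtain ⟨Y, hY, hYy⟩ := exists_smoothFieldAt (I := I) x₀ y
  have h0 := h.nijenhuis_eq_zero x₀ X Y hX hY
  rw [nijenhuis_eq_nijForm hJ (h.isAlmostComplex.sq x₀) hX hY hXx hYy] at h0
  exact (smul_eq_zero.1 h0).resolve_left (by norm_num)

end Local

section Families

variable {V : Type*} [NormedAddCommGroup V] [NormedSpace ℝ V]
  {A : Type*} [TopologicalSpace A] {I : ModelWithCorners ℝ V A}
  {N : Type*} [TopologicalSpace N] [ChartedSpace A N] [IsManifold I ∞ N]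

/-- The values at `x₀` of a family of endomorphism fields, in a fixed vector space. -/
def valueAt {W : Type*} (F : W → EndField I N) (x₀ : N) : W → V →L[ℝ] V :=
  fun w => F w x₀

/-- A family of endomorphism fields, in the coordinates given by the preferred chart at `x₀`. -/
def coordFamily {W : Type*} (F : W → EndField I N) (x₀ : N) : V × W → V →L[ℝ] V :=
  fun p => coordEndField I x₀ (F p.2) p.1

theorem coordFamily_self {W : Type*} (F : W → EndField I N) (x₀ : N) (w : W) :
    coordFamily F x₀ (extChartAt I x₀ x₀, w) = valueAt F x₀ w :=
  coordEndField_self x₀ (F w)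

variable {W : Type*} [NormedAddCommGroup W] [NormedSpace ℂ W]
  {F : W → EndField I N} {U : Set W}

theorem IsHolomorphicOn.contMDiffAt_coordEnd (hF : IsHolomorphicOn I F U) (hU : IsOpen U)
    (x₀ : N) {w : W} (hw : w ∈ U) :
    ContMDiffAt (I.prod 𝓘(ℝ, W)) 𝓘(ℝ, V →L[ℝ] V) ∞
      (fun t : N × W => coordEnd I x₀ t.1 (F t.2 t.1)) (x₀, w) :=
  (contMDiffAt_end_iff (b := fun t : N × W => t.1) (x := (x₀, w)) contMDiffAt_fst
    (fun t => F t.2 t.1)).1 (hF.smooth.contMDiffAt ((isOpen_univ.prod hU).mem_nhds ⟨mem_univ _, hw⟩))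

theorem IsHolomorphicOn.contDiffAt_coordFamily [I.Boundaryless] (hF : IsHolomorphicOn I F U)
    (hU : IsOpen U) (x₀ : N) {w : W} (hw : w ∈ U) :
    ContDiffAt ℝ ∞ (coordFamily F x₀) (extChartAt I x₀ x₀, w) := by
  have h1 := hF.contMDiffAt_coordEnd hU x₀ hw
  have h2 : ContMDiffAt 𝓘(ℝ, V) I ∞ (extChartAt I x₀).symm (extChartAt I x₀ x₀) :=
    (contMDiffOn_extChartAt_symm x₀).contMDiffAt (extChartAt_target_mem_nhds x₀)
  have h3 : ContMDiffAt 𝓘(ℝ, V × W) (I.prod 𝓘(ℝ, W)) ∞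
      (fun p : V × W => ((extChartAt I x₀).symm p.1, p.2)) (extChartAt I x₀ x₀, w) :=
    (ContMDiffAt.comp (extChartAt I x₀ x₀, w) (f := Prod.fst) h2 contDiffAt_fst.contMDiffAt).prodMk
      contDiffAt_snd.contMDiffAt
  rw [← extChartAt_to_inv (I := I) x₀] at h1
  have h4 := ContMDiffAt.comp (extChartAt I x₀ x₀, w) (by simpa using h1) h3
  exact h4.contDiffAt

theorem IsHolomorphicOn.hasFDerivAt_coordEndField [I.Boundaryless] (hF : IsHolomorphicOn I F U)
    (hU : IsOpen U) (x₀ : N) {w : W} (hw : w ∈ U) :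
    HasFDerivAt (coordEndField I x₀ (F w))
      (fderiv ℝ (coordFamily F x₀) (extChartAt I x₀ x₀, w) ∘L ContinuousLinearMap.inl ℝ V W)
      (extChartAt I x₀ x₀) := by
  have h := ((hF.contDiffAt_coordFamily hU x₀ hw).differentiableAt (by simp)).hasFDerivAt
  exact HasFDerivAt.comp (f := fun u => (u, w)) (extChartAt I x₀ x₀) h
    (hasFDerivAt_prodMk_left (extChartAt I x₀ x₀) w)

theorem IsHolomorphicOn.hasFDerivAt_valueAt [I.Boundaryless] (hF : IsHolomorphicOn I F U)
    (hU : IsOpen U) (x₀ : N) {w : W} (hw : w ∈ U) :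
    HasFDerivAt (valueAt F x₀)
      (fderiv ℝ (coordFamily F x₀) (extChartAt I x₀ x₀, w) ∘L ContinuousLinearMap.inr ℝ V W) w := by
  have h := ((hF.contDiffAt_coordFamily hU x₀ hw).differentiableAt (by simp)).hasFDerivAt
  have h' := h.comp w (hasFDerivAt_prodMk_right (extChartAt I x₀ x₀) w)
  refine h'.congr_of_eventuallyEq (.of_forall fun y => ?_)
  exact (coordFamily_self F x₀ y).symm

theorem IsHolomorphicOn.fderiv_coordFamily_I_smul [I.Boundaryless] (hF : IsHolomorphicOn I F U)
    (hU : IsOpen U) (x₀ : N) {w : W} (hw : w ∈ U) (h : W) :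
    fderiv ℝ (coordFamily F x₀) (extChartAt I x₀ x₀, w) (0, Complex.I • h)
      = valueAt F x₀ w ∘L
        fderiv ℝ (coordFamily F x₀) (extChartAt I x₀ x₀, w) (0, h) := by
  have : fderiv ℝ (valueAt F x₀) w (Complex.I • h) =
      valueAt F x₀ w ∘L fderiv ℝ (valueAt F x₀) w h := hF.complexLinear w hw x₀ h
  rwa [(hF.hasFDerivAt_valueAt hU x₀ hw).fderiv] at this

/-- The Nijenhuis form of the members of a holomorphic family vanishes at a limit of parameters
at which they are integrable. -/
theorem IsHolomorphicOn.nijForm_eq_zero [CompleteSpace V] [I.Boundaryless]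
    (hF : IsHolomorphicOn I F U) (hU : IsOpen U) (x₀ : N) {c : W} [(𝓝[≠] c).NeBot]
    (hint : ∀ w ∈ U, w ≠ c → IsIntegrable I (F w)) {w : W} (hw : w ∈ U) (x y : V) :
    nijForm (valueAt F x₀ w) (fderiv ℝ (coordFamily F x₀) (extChartAt I x₀ x₀, w) ∘L
      ContinuousLinearMap.inl ℝ V W) x y = 0 := by
  have off : ∀ w ∈ U, w ≠ c → nijForm (valueAt F x₀ w)
      (fderiv ℝ (coordFamily F x₀) (extChartAt I x₀ x₀, w) ∘L
        ContinuousLinearMap.inl ℝ V W) x y = 0 := by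
    intro w hw hwc
    have hd := hF.hasFDerivAt_coordEndField hU x₀ hw
    have := (hint w hw hwc).nijForm_eq_zero hd.differentiableAt x y
    rwa [hd.fderiv] at this
  by_cases hwc : w = c
  · subst hwc
    have hj : ContinuousAt (valueAt F x₀) w :=
      (hF.hasFDerivAt_valueAt hU x₀ hw).continuousAt
    have hd : ContinuousAt (fun z => fderiv ℝ (coordFamily F x₀) (extChartAt I x₀ x₀, z)) w := by
      have h1 : ContinuousAt (fderiv ℝ (coordFamily F x₀)) (extChartAt I x₀ x₀, w) :=
        ((hF.contDiffAt_coordFamily hU x₀ hw).fderiv_right (m := 0) (by simp)).continuousAt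
      exact h1.comp (f := fun z : W => (extChartAt I x₀ x₀, z)) (by fun_prop)
    have hc : ContinuousAt (fun z => nijForm (valueAt F x₀ z)
        (fderiv ℝ (coordFamily F x₀) (extChartAt I x₀ x₀, z) ∘L
          ContinuousLinearMap.inl ℝ V W) x y) w := by
      simp only [nijForm, ContinuousLinearMap.comp_apply]
      have hjv : ∀ v : V, ContinuousAt (fun z => valueAt F x₀ z v) w :=
        fun v => hj.clm_apply continuousAt_const
      have hdv : ∀ {f : W → V} (v : V), ContinuousAt f w → ContinuousAt (fun z =>
          fderiv ℝ (coordFamily F x₀) (extChartAt I x₀ x₀, z)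
            (ContinuousLinearMap.inl ℝ V W (f z)) v) w := fun v hf =>
        (hd.clm_apply ((ContinuousLinearMap.inl ℝ V W).continuous.continuousAt.comp hf)).clm_apply
          continuousAt_const
      exact (((hdv y (hjv x)).sub (hdv x (hjv y))).add
        (hj.clm_apply (hdv x continuousAt_const))).sub (hj.clm_apply (hdv y continuousAt_const))
    have h0 : (fun _ => (0 : V)) =ᶠ[𝓝[≠] w] (fun z => nijForm (valueAt F x₀ z)
        (fderiv ℝ (coordFamily F x₀) (extChartAt I x₀ x₀, z) ∘L
          ContinuousLinearMap.inl ℝ V W) x y) := by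
      filter_upwards [self_mem_nhdsWithin, nhdsWithin_le_nhds (hU.mem_nhds hw)] with z hz hzU
      exact (off z hzU hz).symm
    exact tendsto_nhds_unique (hc.tendsto.mono_left nhdsWithin_le_nhds)
      (tendsto_const_nhds.congr' h0)
  · exact off w hw hwc

end Families

section Product

variable {V : Type*} [NormedAddCommGroup V] [NormedSpace ℝ V]
  {M : Type*} [TopologicalSpace M] [ChartedSpace V M] [IsManifold 𝓘(ℝ, V) ∞ M]
  {Δ : Opens ℂ}

theorem tangentCoordChange_opens {a b z : Δ} :
    tangentCoordChange 𝓘(ℝ, ℂ) a b z = ContinuousLinearMap.id ℝ ℂ := by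
  have h : tangentCoordChange 𝓘(ℝ, ℂ) a b z = tangentCoordChange 𝓘(ℝ, ℂ) a a z := rfl
  ext1
  rw [h, tangentCoordChange_self]
  · rfl
  · rw [extChartAt_source]
    exact mem_chart_source ℂ z

theorem tangentCoordChange_prod_opens {a b q : M × Δ} (ha : q.1 ∈ (chartAt V a.1).source)
    (hb : q.1 ∈ (chartAt V b.1).source) :
    tangentCoordChange (prodModel V) a b q =
      (tangentCoordChange 𝓘(ℝ, V) a.1 b.1 q.1).prodMap (ContinuousLinearMap.id ℝ ℂ) := by
  have h1 := hasFDerivWithinAt_tangentCoordChange (I := 𝓘(ℝ, V)) (x := a.1) (y := b.1) (z := q.1)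
    (by simpa [extChartAt_source] using ⟨ha, hb⟩)
  have h2 := hasFDerivWithinAt_tangentCoordChange (I := 𝓘(ℝ, ℂ)) (x := a.2) (y := b.2) (z := q.2)
    ⟨mem_extChartAt_source q.2, mem_extChartAt_source q.2⟩
  have h3 := hasFDerivWithinAt_tangentCoordChange (I := prodModel V) (x := a) (y := b) (z := q)
    (by
      simp only [extChartAt_prod, PartialEquiv.prod_source, extChartAt_source]
      exact ⟨⟨ha, mem_chart_source ℂ q.2⟩, ⟨hb, mem_chart_source ℂ q.2⟩⟩)
  rw [tangentCoordChange_opens] at h2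
  rw [ModelWithCorners.range_eq_univ, hasFDerivWithinAt_univ] at h1 h2 h3
  refine h3.unique ?_
  have := HasFDerivAt.prodMap (extChartAt (prodModel V) a q) h1 h2
  exact this

theorem coordEnd_prod_opens {a q : M × Δ} (ha : q.1 ∈ (chartAt V a.1).source) (j : V →L[ℝ] V)
    (k : ℂ →L[ℝ] ℂ) :
    coordEnd (prodModel V) a q (j.prodMap k) = (coordEnd 𝓘(ℝ, V) a.1 q.1 j).prodMap k := by
  rw [coordEnd, tangentCoordChange_prod_opens (mem_chart_source V q.1) ha,
    tangentCoordChange_prod_opens ha (mem_chart_source V q.1)]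
  rfl

variable {F : ℂ → EndField 𝓘(ℝ, V) M}

theorem coordEndField_productStructure {q : M × Δ} {p : V × ℂ}
    (hp : p.1 ∈ (extChartAt 𝓘(ℝ, V) q.1).target) (hp' : p.2 ∈ Δ) :
    coordEndField (prodModel V) q (productStructure F Δ) p =
      (coordFamily F q.1 p).prodMap (Complex.I • ContinuousLinearMap.id ℝ ℂ) := by
  have e0 : (extChartAt 𝓘(ℝ, ℂ) q.2).symm p.2 = ⟨p.2, hp'⟩ :=
    (extChartAt 𝓘(ℝ, ℂ) q.2).left_inv (mem_extChartAt_source (⟨p.2, hp'⟩ : Δ))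
  have e1 : (extChartAt (prodModel V) q).symm p
      = ((extChartAt 𝓘(ℝ, V) q.1).symm p.1, ⟨p.2, hp'⟩) :=
    Prod.ext rfl e0
  rw [coordEndField, e1]
  refine coordEnd_prod_opens ?_ _ _
  rw [← extChartAt_source 𝓘(ℝ, V)]
  exact (extChartAt 𝓘(ℝ, V) q.1).map_target hp

theorem IsHolomorphicOn.hasFDerivAt_coordEndField_productStructure
    (hF : IsHolomorphicOn 𝓘(ℝ, V) F Δ) (q : M × Δ) :
    HasFDerivAt (coordEndField (prodModel V) q (productStructure F Δ))
      (ContinuousLinearMap.prodMapL ℝ V V ℂ ℂ ∘L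
        (fderiv ℝ (coordFamily F q.1) (extChartAt 𝓘(ℝ, V) q.1 q.1, (q.2 : ℂ))).prod 0)
      (extChartAt (prodModel V) q q) := by
  have h := ((hF.contDiffAt_coordFamily Δ.isOpen q.1 q.2.2).differentiableAt (by simp)).hasFDerivAt
  have h1 := (ContinuousLinearMap.prodMapL ℝ V V ℂ ℂ).hasFDerivAt.comp _
    (h.prodMk (hasFDerivAt_const (Complex.I • ContinuousLinearMap.id ℝ ℂ : ℂ →L[ℝ] ℂ) _))
  refine h1.congr_of_eventuallyEq ?_
  filter_upwards [prod_mem_nhds (extChartAt_target_mem_nhds (I := 𝓘(ℝ, V)) q.1)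
    (Δ.isOpen.mem_nhds q.2.2)] with p hp
  exact coordEndField_productStructure hp.1 hp.2

/-- The product structure of a holomorphic family of almost complex structures is smooth. -/
theorem IsHolomorphicOn.isAlmostComplex_productStructure (hF : IsHolomorphicOn 𝓘(ℝ, V) F Δ)
    (hJ : ∀ z ∈ Δ, IsAlmostComplex 𝓘(ℝ, V) (F z)) :
    IsAlmostComplex (prodModel V) (productStructure F Δ) where
  smooth q := by
    refine (contMDiffAt_end_iff (b := fun t : M × Δ => t) contMDiffAt_id _).2 ?_
    have h1 : ContMDiffAt (prodModel V) 𝓘(ℝ, V →L[ℝ] V) ∞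
        (fun t : M × Δ => coordEnd 𝓘(ℝ, V) q.1 t.1 (F t.2 t.1)) q :=
      ContMDiffAt.comp (g := fun t : M × ℂ => coordEnd 𝓘(ℝ, V) q.1 t.1 (F t.2 t.1))
        (f := fun t : M × Δ => (t.1, (t.2 : ℂ))) q (hF.contMDiffAt_coordEnd Δ.isOpen q.1 q.2.2)
        (contMDiffAt_fst.prodMk (contMDiff_subtype_val.contMDiffAt.comp q contMDiffAt_snd))
    have h2 := h1.clm_prodMap (contMDiffAt_const
      (c := (Complex.I • ContinuousLinearMap.id ℝ ℂ : ℂ →L[ℝ] ℂ)))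
    refine h2.congr_of_eventuallyEq ?_
    filter_upwards [continuous_fst.continuousAt.preimage_mem_nhds
      ((chartAt V q.1).open_source.mem_nhds (mem_chart_source V q.1))] with t ht
    exact coordEnd_prod_opens ht _ _
  sq q v := by
    refine Prod.ext ((hJ q.2 q.2.2).sq q.1 (v : V × ℂ).1) ?_
    change Complex.I * (Complex.I * (v : V × ℂ).2) = -(v : V × ℂ).2
    rw [← mul_assoc, Complex.I_mul_I, neg_one_mul]

theorem nijForm_prodMap_eq_zero {j : V →L[ℝ] V} {d : V × ℂ →L[ℝ] V →L[ℝ] V}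
    (hd : ∀ h : ℂ, d (0, Complex.I • h) = j ∘L d (0, h))
    (hj : ∀ x y : V, nijForm j (d ∘L ContinuousLinearMap.inl ℝ V ℂ) x y = 0) (x y : V × ℂ) :
    nijForm (j.prodMap (Complex.I • ContinuousLinearMap.id ℝ ℂ))
      (ContinuousLinearMap.prodMapL ℝ V V ℂ ℂ ∘L d.prod 0) x y = 0 := by
  obtain ⟨x, a⟩ := x
  obtain ⟨y, b⟩ := y
  have split : ∀ (v : V) (h : ℂ) (w : V), d (v, h) w = d (v, 0) w + d (0, h) w := by
    intro v h w
    rw [← add_apply, ← map_add]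
    simp
  have hd' : ∀ (h : ℂ) (w : V), d (0, Complex.I * h) w = j (d (0, h) w) := fun h w =>
    congrArg (fun L : V →L[ℝ] V => L w) (hd h)
  have hxy : d (j x, 0) y - d (j y, 0) x + j (d (y, 0) x) - j (d (x, 0) y) = 0 := hj x y
  refine Prod.ext ?_ ?_
  · change d (j x, Complex.I * a) y - d (j y, Complex.I * b) x + j (d (y, b) x)
      - j (d (x, a) y) = 0
    rw [split (j x), split (j y), split y, split x, hd', hd', map_add, map_add, ← hxy]
    abel
  · change (0 : ℂ) - 0 + Complex.I * 0 - Complex.I * 0 = 0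
    simp

/-- The product structure of a holomorphic family of almost complex structures, integrable away
from one parameter, is integrable. -/
theorem IsHolomorphicOn.isIntegrable_productStructure [FiniteDimensional ℝ V]
    (hF : IsHolomorphicOn 𝓘(ℝ, V) F Δ) (hJ : ∀ z ∈ Δ, IsAlmostComplex 𝓘(ℝ, V) (F z)) {c : ℂ}
    (hint : ∀ z ∈ Δ, z ≠ c → IsIntegrable 𝓘(ℝ, V) (F z)) :
    IsIntegrable (prodModel V) (productStructure F Δ) where
  isAlmostComplex := hF.isAlmostComplex_productStructure hJ
  nijenhuis_eq_zero q X Y hX hY := by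
    have : CompleteSpace V := FiniteDimensional.complete ℝ V
    have hd := hF.hasFDerivAt_coordEndField_productStructure q
    rw [nijenhuis_eq_nijForm hd.differentiableAt
      ((hF.isAlmostComplex_productStructure hJ).sq q) hX hY rfl rfl, hd.fderiv]
    have h0 := nijForm_prodMap_eq_zero (V := V) (j := valueAt F q.1 q.2)
      (fun h => hF.fderiv_coordFamily_I_smul Δ.isOpen q.1 q.2.2 h)
      (fun x y => hF.nijForm_eq_zero Δ.isOpen q.1 hint q.2.2 x y) (X q) (Y q)
    exact (congrArg (fun v : V × ℂ => (1 / 4 : ℝ) • v) h0).trans (smul_zero _)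

theorem productIsIntegrable [FiniteDimensional ℝ V]
    (hF : IsHolomorphicOn 𝓘(ℝ, V) F Δ) (hJ : ∀ z ∈ Δ, IsAlmostComplex 𝓘(ℝ, V) (F z)) {c : ℂ}
    (hint : ∀ z ∈ Δ, z ≠ c → IsIntegrable 𝓘(ℝ, V) (F z)) :
    ProductIsIntegrable F Δ := by
  have h := hF.isIntegrable_productStructure hJ hint
  refine ⟨h, fun q X Y hX hY _ _ => ?_⟩
  have e : nijenhuis (prodModel V) (productStructure F Δ) X Y q
      = (1 / 4 : ℝ) • (lieDerivEnd (prodModel V) (productStructure F Δ)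
          (applyField (prodModel V) (productStructure F Δ) X) Y q
        - productStructure F Δ q
          (lieDerivEnd (prodModel V) (productStructure F Δ) X Y q)) := by
    rw [nijenhuis, lieDerivEnd, lieDerivEnd, map_sub, h.isAlmostComplex.sq]
    congr 1
    abel
  exact ⟨e, e.symm.trans (h.nijenhuis_eq_zero q X Y hX hY)⟩

end Product

section Pushforward

variable {V : Type*} [NormedAddCommGroup V] [NormedSpace ℝ V] [CompleteSpace V]
  {A : Type*} [TopologicalSpace A] {I : ModelWithCorners ℝ V A}
  {N : Type*} [TopologicalSpace N] [ChartedSpace A N] [IsManifold I ∞ N]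

/-- Integrability is transported by diffeomorphisms. -/
theorem IsIntegrable.of_diffeomorph {J J' : EndField I N} (hJ : IsIntegrable I J)
    (hJ' : IsAlmostComplex I J') (f : N ≃ₘ^∞⟮I, I⟯ N)
    (hf : ∀ (p : N) (v : TangentSpace I p),
      mfderiv I I f p (J p v) = J' (f p) (mfderiv I I f p v)) :
    IsIntegrable I J' where
  isAlmostComplex := hJ'
  nijenhuis_eq_zero p X Y hX hY := by
    obtain ⟨p, rfl⟩ : ∃ p', f p' = p := f.surjective p
    have two_le : minSmoothness ℝ 2 ≤ (∞ : ℕ∞ω) := by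
      rw [minSmoothness_of_isRCLikeNormedField]
      exact WithTop.coe_le_coe.2 (le_top : (2 : ℕ∞) ≤ ⊤)
    have : IsManifold I (minSmoothness ℝ 2) N := IsManifold.of_le (n := ∞) two_le
    have inv : ∀ q, (mfderiv I I f q).IsInvertible := fun q =>
      ⟨f.mfderivToContinuousLinearEquiv (by simp) q, rfl⟩
    have pb : ∀ (q : N) (v : TangentSpace I (f q)),
        (mfderiv I I f q).inverse (J' (f q) v) = J q ((mfderiv I I f q).inverse v) := by
      intro q v
      obtain ⟨w, rfl⟩ : ∃ w, mfderiv I I f q w = v := (inv q).bijective.surjective v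
      rw [← hf, (inv q).inverse_apply_self, (inv q).inverse_apply_self]
    have app : ∀ Z : (q : N) → TangentSpace I q, mpullback I I f (applyField I J' Z)
        = applyField I J (mpullback I I f Z) := fun Z => funext fun q => pb q (Z (f q))
    have sm : ∀ {Z : (q : N) → TangentSpace I q}, SmoothFieldAt I Z (f p) →
        SmoothFieldAt I (mpullback I I f Z) p := fun hZ =>
      ContMDiffAt.mpullback_vectorField_preimage hZ (f.contMDiff p) (inv p) (by simp)
    have smJ : ∀ {Z : (q : N) → TangentSpace I q}, SmoothFieldAt I Z (f p) →
        SmoothFieldAt I (applyField I J' Z) (f p) := fun hZ =>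
      ContMDiffAt.clm_bundle_apply (hJ'.smooth (f p)) hZ
    have br : ∀ {Z Z' : (q : N) → TangentSpace I q}, SmoothFieldAt I Z (f p) →
        SmoothFieldAt I Z' (f p) → (mfderiv I I f p).inverse (mlieBracket I Z Z' (f p))
          = mlieBracket I (mpullback I I f Z) (mpullback I I f Z') p := fun hZ hZ' =>
      mpullback_mlieBracket (hZ.mdifferentiableAt (by simp)) (hZ'.mdifferentiableAt (by simp))
        (f.contMDiff p) two_le
    have h0 := hJ.nijenhuis_eq_zero p _ _ (sm hX) (sm hY)
    have h1 : (mfderiv I I f p).inverse (nijenhuis I J' X Y (f p)) = 0 := by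
      rw [← h0]
      simp only [nijenhuis, map_smul, map_sub, pb]
      rw [br (smJ hX) (smJ hY), br (smJ hX) hY, br hX (smJ hY), br hX hY, app, app]
    obtain ⟨w, hw⟩ := (inv p).bijective.surjective (nijenhuis I J' X Y (f p))
    rw [← hw, (inv p).inverse_apply_self] at h1
    rw [← hw, h1, map_zero]

end Pushforward

section Composition

variable {V : Type*} [NormedAddCommGroup V] [NormedSpace ℝ V]
  {A : Type*} [TopologicalSpace A] {I : ModelWithCorners ℝ V A} [I.Boundaryless]
  {N : Type*} [TopologicalSpace N] [ChartedSpace A N] [IsManifold I ∞ N]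
  {W : Type*} [NormedAddCommGroup W] [NormedSpace ℂ W] [CompleteSpace W]
  {W₁ : Type*} [NormedAddCommGroup W₁] [NormedSpace ℂ W₁]

/-- The composition of a holomorphic family with a holomorphic map is holomorphic. -/
theorem IsHolomorphicOn.comp {F : W → EndField I N} {U : Set W} (hF : IsHolomorphicOn I F U)
    (hU : IsOpen U) {g : W₁ → W} {U' : Set W₁} (hg : ∀ z ∈ U', AnalyticAt ℂ g z)
    (hgU : MapsTo g U' U) : IsHolomorphicOn I (fun z => F (g z)) U' where
  smooth := by
    have h1 : ContMDiffOn (I.prod 𝓘(ℝ, W₁)) (I.prod 𝓘(ℝ, W)) ∞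
        (fun q : N × W₁ => (q.1, g q.2)) (univ ×ˢ U') := by
      rintro ⟨p, z⟩ ⟨-, hz⟩
      have h2 : ContMDiffAt 𝓘(ℝ, W₁) 𝓘(ℝ, W) ∞ g z :=
        ((hg z hz).contDiffAt.restrict_scalars ℝ).contMDiffAt
      exact (contMDiffAt_fst.prodMk (ContMDiffAt.comp (f := Prod.snd) (p, z) h2
        contMDiffAt_snd)).contMDiffWithinAt
    exact hF.smooth.comp h1 fun q hq => ⟨mem_univ _, hgU hq.2⟩
  complexLinear z hz p h := by
    have h1 := hF.hasFDerivAt_valueAt hU p (hgU hz)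
    have h2 := (hg z hz).differentiableAt.hasFDerivAt.restrictScalars ℝ
    have h3 : fderiv ℝ (valueAt (fun z => F (g z)) p) z = _ := (h1.comp z h2).fderiv
    have h4 : fderiv ℝ (valueAt F p) (g z) (Complex.I • fderiv ℂ g z h) =
      valueAt F p (g z) ∘L fderiv ℝ (valueAt F p) (g z) (fderiv ℂ g z h) :=
        hF.complexLinear (g z) (hgU hz) p _
    rw [h1.fderiv] at h4
    change fderiv ℝ (valueAt (fun z => F (g z)) p) z (Complex.I • h) =
      valueAt F p (g z) ∘L fderiv ℝ (valueAt (fun z => F (g z)) p) z h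
    rw [h3]
    simp only [ContinuousLinearMap.comp_apply, ContinuousLinearMap.coe_restrictScalars', map_smul]
      at h4 ⊢
    exact h4

end Composition

end

end ProductACS

theorem product_complex_structure_is_integrable
    {V : Type*} [NormedAddCommGroup V] [NormedSpace ℝ V] [FiniteDimensional ℝ V]
    {M : Type*} [TopologicalSpace M] [ChartedSpace V M] [IsManifold 𝓘(ℝ, V) ∞ M]
    [CompactSpace M] [T2Space M]
    (σ : FormField 𝓘(ℝ, V) M) (hσ : IsSymplectic 𝓘(ℝ, V) σ)
    (G : Type*) [Group G] [MulAction G M]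
    (hG : ∀ g : G, ContMDiff 𝓘(ℝ, V) 𝓘(ℝ, V) ∞ (fun p : M => g • p)) :
    -- holomorphic maps from a disk to `𝒥^G` with integrable values off the centre
    (∀ (c : ℂ) (δ : ℝ), 0 < δ → ∀ F : ℂ → EndField 𝓘(ℝ, V) M,
      (∀ z ∈ disk c δ, IsInvariantCompatible 𝓘(ℝ, V) σ G (F z)) →
      IsHolomorphicOn 𝓘(ℝ, V) F (disk c δ) →
      (∀ z ∈ disk c δ, z ≠ c → IsIntegrable 𝓘(ℝ, V) (F z)) →
      ProductIsIntegrable F (disk c δ)) ∧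
    -- the maps `z ↦ Φ₁(ρ(z) · x)`, where `orb` is `z ↦ ρ(z) · x`, extended to `0` by its limit
    (∀ (H : Type*) [NormedAddCommGroup H] [NormedSpace ℂ H] [FiniteDimensional ℂ H]
      (KC : Type*) [Group KC] (rep : KC →* (H →L[ℂ] H))
      (r : ℝ) (Φ₁ : H → EndField 𝓘(ℝ, V) M),
      (∀ y ∈ Metric.ball (0 : H) r, IsInvariantCompatible 𝓘(ℝ, V) σ G (Φ₁ y)) →
      IsHolomorphicOn 𝓘(ℝ, V) Φ₁ (Metric.ball (0 : H) r) →
      (∀ (k : KC), ∀ y ∈ Metric.ball (0 : H) r, rep k y ∈ Metric.ball (0 : H) r →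
        IsIntegrable 𝓘(ℝ, V) (Φ₁ y) →
        OnComplexifiedOrbit 𝓘(ℝ, V) σ G (Φ₁ y) (Φ₁ (rep k y))) →
      ∀ x ∈ Metric.ball (0 : H) r, IsIntegrable 𝓘(ℝ, V) (Φ₁ x) →
      ∀ (ρ : ℂˣ →* KC) (orb : ℂ → H), (∀ u : ℂˣ, orb u = rep (ρ u) x) →
      DifferentiableOn ℂ orb {0}ᶜ → Tendsto orb (𝓝[≠] 0) (𝓝 (orb 0)) →
      ∀ δ : ℝ, 0 < δ → (∀ z ∈ disk 0 δ, orb z ∈ Metric.ball (0 : H) r) →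
      IsHolomorphicOn 𝓘(ℝ, V) (fun z => Φ₁ (orb z)) (disk 0 δ) ∧
      ProductIsIntegrable (fun z => Φ₁ (orb z)) (disk 0 δ)) := by
  refine ⟨fun c δ _ F hF hol hint => productIsIntegrable hol
    (fun z hz => (hF z hz).isAlmostComplex) hint, ?_⟩
  intro H _ _ _ KC _ rep r Φ₁ hΦ hol heq x hx hxint ρ orb horb hdiff hlim δ _ hδ
  have : CompleteSpace H := FiniteDimensional.complete ℂ H
  have : CompleteSpace V := FiniteDimensional.complete ℝ V
  have hcont : ContinuousAt orb 0 := continuousAt_iff_punctured_nhds.2 hlim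
  have han : ∀ z, AnalyticAt ℂ orb z := by
    have h0 : ∀ z ≠ 0, DifferentiableAt ℂ orb z := fun z hz =>
      hdiff.differentiableAt (isOpen_compl_singleton.mem_nhds hz)
    intro z
    by_cases hz : z = 0
    · subst hz
      exact Complex.analyticAt_of_differentiable_on_punctured_nhds_of_continuousAt
        (eventually_mem_nhdsWithin.mono h0) hcont
    · exact hdiff.analyticAt (isOpen_compl_singleton.mem_nhds hz)
  have hcomp : IsHolomorphicOn 𝓘(ℝ, V) (fun z => Φ₁ (orb z)) (disk 0 δ) :=
    hol.comp Metric.isOpen_ball (fun z _ => han z) hδ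
  refine ⟨hcomp, productIsIntegrable (c := 0) hcomp
    (fun z hz => (hΦ _ (hδ z hz)).isAlmostComplex) fun z hz hz0 => ?_⟩
  have e : orb z = rep (ρ (Units.mk0 z hz0)) x := horb (Units.mk0 z hz0)
  have hz' := hδ z hz
  rw [e] at hz' ⊢
  obtain ⟨f, _, -, -, -, hf, -⟩ := heq _ x hx hz' hxint
  exact hxint.of_diffeomorph (hΦ _ hz').isAlmostComplex f hf
end

section
/- Let $X$ be a compact connected complex manifold of dimension $n$ and $L\to X$ a holomorphic line bundle with a smooth Hermitian metric $h$ whose curvature form $\omega=-\sqrt{-1}\,\partial\bar\partial\log h$ is positive; thus $(X,L)$ is polarized and $\omega$ is a Kähler form in $c_1(L)$ (up to the usual factor $2\pi$). Let $J$ be the complex structure of $X$, let $\mathcal H=\{\phi\in C^\infty(X,\mathbb R):\omega_\phi:=\omega+\sqrt{-1}\,\partial\bar\partial\phi>0\}$, and for $\phi\in\mathcal H$ let $g_\phi$, $S(\phi)$, $d\mu_\phi=\omega_\phi^n/n!$ be the metric of $\omega_\phi$, its scalar curvature and its volume form, and $\underline S$ the mean value of $S(\phi)$. Let $\mathrm{Aut}(X,L)$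 be the group of holomorphic automorphisms of $X$ that lift to holomorphic automorphisms of $L$, linear on the fibres, with the compact-open topology. For a compact connected subgroup $G\subseteq\mathrm{Aut}(X,L)$ that preserves $\omega$, the elements of $\mathrm{Lie}(G)$ are regarded as vector fields on $X$, and $\mathcal H^G$ is the set of $G$-invariant $\phi\in\mathcal H$. For $\phi\in\mathcal H^G$ let $P^G_\phi$ be the space of smooth functions $f$ with $\int_X f\,d\mu_\phi=0$ such that $J\nabla_{g_\phi}f$ is a Killing vector field of $g_\phi$ lying in $\mathrm{Lie}(G)$, let $\Pi^G_\phi$ be the $L^2(d\mu_\phi)$-orthogonal projection to $P^G_\phi$, and let $S^G(\phi)=S(\phi)-\underline S-\Pi^G_\phi S(\phi)$. The extremal vector field $V^G$ is the vector field defined by $V^G=\nabla_{g_\phi}\bigl(\Pi^G_\phi S(\phi)\bigr)$ for any $\phi\in\mathcal H^G$. A modified K-energy $E^G$ is a function on $\mathcal H^G$ that is a primitive of the one-form $\phi\mapsto -S^G(\phi)\,d\mu_\phi$, i.e. $\frac{d}{dt}\big|_{t=0}E^G(\phi+t\psi)=-\int_X\psi\,S^G(\phi)\,d\mu_\phi$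 for all $\phi\in\mathcal H^G$ and all $G$-invariant $\psi\in C^\infty(X,\mathbb R)$. Let $G^m$ be a maximal compact connected subgroup of $\mathrm{Aut}(X,L)$ that preserves $\omega$, and let $G\subseteq G^m$ be a compact connected subgroup such that $JV^{G^m}\in\mathrm{Lie}(G)$. Then there is a constant $c$ with $E^{G^m}(\phi)=E^G(\phi)+c$ for all $\phi\in\mathcal H^{G^m}$. Consequently, if $\phi_0\in\mathcal H^{G^m}$ minimises $E^G$ on $\mathcal H^G$, then $\phi_0$ minimises $E^{G^m}$ on $\mathcal H^{G^m}$. -/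
open scoped Manifold ContDiff Bundle ComplexOrder
open MeasureTheory Bundle

noncomputable section

namespace KahlerPol

/-- The model space `ℂⁿ`. -/
abbrev Cn (n : ℕ) : Type := Fin n → ℂ

/-- The operator `∂/∂z_j = (∂/∂x_j - i ∂/∂y_j)/2` on functions on `ℂⁿ`. -/
def dz {n : ℕ} (j : Fin n) (F : Cn n → ℂ) (z : Cn n) : ℂ :=
  (1 / 2) * (fderiv ℝ F z (Pi.single j 1) - Complex.I * fderiv ℝ F z (Pi.single j Complex.I))

/-- The operator `∂/∂z̄_j = (∂/∂x_j + i ∂/∂y_j)/2` on functions on `ℂⁿ`. -/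
def dzbar {n : ℕ} (j : Fin n) (F : Cn n → ℂ) (z : Cn n) : ℂ :=
  (1 / 2) * (fderiv ℝ F z (Pi.single j 1) + Complex.I * fderiv ℝ F z (Pi.single j Complex.I))

/-- The complex Hessian `(∂²F/∂z_j∂z̄_k)_{jk}` of a real function on `ℂⁿ`, i.e. the coefficient
matrix of the real `(1,1)`-form `√-1 ∂∂̄F = √-1 ∑ F_{jk̄} dz_j ∧ dz̄_k`. -/
def complexHessian {n : ℕ} (F : Cn n → ℝ) (z : Cn n) : Matrix (Fin n) (Fin n) ℂ :=
  Matrix.of fun j k => dz j (dzbar k fun w => (F w : ℂ)) z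

section Manifold

variable {n : ℕ} {X : Type*} [TopologicalSpace X] [ChartedSpace (Cn n) X]

/-- Smooth real functions on the complex manifold `X`. -/
def Smooth (n : ℕ) {X : Type*} [TopologicalSpace X] [ChartedSpace (Cn n) X] (f : X → ℝ) : Prop :=
  ContMDiff 𝓘(ℝ, Cn n) 𝓘(ℝ, ℝ) ∞ f

/-- Real vector fields on `X`; the real tangent space at `x` is `ℂⁿ`, through the preferred
chart at `x`. -/
abbrev VField (n : ℕ) (X : Type*) [TopologicalSpace X] [ChartedSpace (Cn n) X] : Type _ :=
  ∀ x : X, TangentSpace 𝓘(ℝ, Cn n) x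

/-- The complex structure `J` of `X` on a tangent space. -/
def J {x : X} (v : TangentSpace 𝓘(ℝ, Cn n) x) : TangentSpace 𝓘(ℝ, Cn n) x :=
  (Complex.I • (show Cn n from v) : Cn n)

/-- The compact-open topology on groups of homeomorphisms: `G` seen inside `C(X, X)`. -/
def asMaps {X : Type*} [TopologicalSpace X] (G : Subgroup (X ≃ₜ X)) : Set C(X, X) :=
  (fun σ : X ≃ₜ X => (⟨σ, σ.continuous⟩ : C(X, X))) '' (G : Set (X ≃ₜ X))

/-- `G` is a compact connected group of transformations. -/
def IsCompactConnected {X : Type*} [TopologicalSpace X] (G : Subgroup (X ≃ₜ X)) : Prop :=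
  IsCompact (asMaps G) ∧ IsConnected (asMaps G)

/-- The Lie algebra of `G`, as a set of vector fields on `X`: the vector fields that generate a
continuous one-parameter subgroup of `G`. -/
def lieAlg (G : Subgroup (X ≃ₜ X)) : Set (VField n X) :=
  {V | ∃ γ : ℝ → X ≃ₜ X, (∀ t, γ t ∈ G) ∧ (∀ s t, γ (s + t) = γ s * γ t) ∧
    Continuous (fun p : ℝ × X => γ p.1 p.2) ∧ ∀ x, IsMIntegralCurve (fun t => γ t x) V}

/-- `f` is constant along the orbits of `G`. -/
def IsInvariant {X : Type*} [TopologicalSpace X] (G : Subgroup (X ≃ₜ X)) (f : X → ℝ) : Prop :=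
  ∀ σ ∈ G, ∀ x, f (σ x) = f x

end Manifold

section Bundle

variable {n : ℕ} {X : Type*} [TopologicalSpace X] [ChartedSpace (Cn n) X]
  (L : X → Type*) [TopologicalSpace (TotalSpace ℂ L)] [∀ x, TopologicalSpace (L x)]
  [∀ x, AddCommGroup (L x)] [∀ x, Module ℂ (L x)] [FiberBundle ℂ L]

/-- The group `Aut(X, L)` of the holomorphic automorphisms of `X` that lift to a holomorphic
automorphism of the line bundle `L`, linear on the fibres. -/
def autGroup (n : ℕ) {X : Type*} [TopologicalSpace X] [ChartedSpace (Cn n) X]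
    (L : X → Type*) [TopologicalSpace (TotalSpace ℂ L)] [∀ x, TopologicalSpace (L x)]
    [∀ x, AddCommGroup (L x)] [∀ x, Module ℂ (L x)] [FiberBundle ℂ L] :
    Subgroup (X ≃ₜ X) where
  carrier := {σ | ContMDiff 𝓘(ℂ, Cn n) 𝓘(ℂ, Cn n) ω σ ∧
    ContMDiff 𝓘(ℂ, Cn n) 𝓘(ℂ, Cn n) ω σ.symm ∧
    ∃ Ψ : Diffeomorph (𝓘(ℂ, Cn n).prod 𝓘(ℂ, ℂ)) (𝓘(ℂ, Cn n).prod 𝓘(ℂ, ℂ))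
        (TotalSpace ℂ L) (TotalSpace ℂ L) ω,
      ∀ x y, σ x = y → ∃ A : L x ≃ₗ[ℂ] L y, ∀ v, Ψ ⟨x, v⟩ = ⟨y, A v⟩}
  one_mem' := by
    refine ⟨contMDiff_id, contMDiff_id, Diffeomorph.refl _ _ _, ?_⟩
    rintro x y rfl
    exact ⟨LinearEquiv.refl ℂ _, fun v => rfl⟩
  mul_mem' := by
    rintro σ τ ⟨h1, h2, Ψ, hΨ⟩ ⟨k1, k2, Φ, hΦ⟩
    refine ⟨h1.comp k1, k2.comp h2, Φ.trans Ψ, ?_⟩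
    rintro x y rfl
    obtain ⟨A, hA⟩ := hΦ x _ rfl
    obtain ⟨B, hB⟩ := hΨ (τ x) _ rfl
    exact ⟨A.trans B, fun v => by
      simp only [Diffeomorph.coe_trans, Function.comp_apply, hA, hB]; rfl⟩
  inv_mem' := by
    rintro σ ⟨h1, h2, Ψ, hΨ⟩
    refine ⟨h2, h1, Ψ.symm, ?_⟩
    rintro y x hx
    have hx' : σ x = y := by rw [← hx]; exact σ.apply_symm_apply y
    obtain ⟨A, hA⟩ := hΨ x y hx'
    refine ⟨A.symm, fun v => ?_⟩
    have := hA (A.symm v)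
    rw [A.apply_symm_apply] at this
    rw [← this]
    exact Ψ.symm_apply_apply _

/-- `G` is a maximal compact connected subgroup of `Aut(X, L)`. -/
def IsMaximalCompactConnected (n : ℕ) {X : Type*} [TopologicalSpace X] [ChartedSpace (Cn n) X]
    (L : X → Type*) [TopologicalSpace (TotalSpace ℂ L)] [∀ x, TopologicalSpace (L x)]
    [∀ x, AddCommGroup (L x)] [∀ x, Module ℂ (L x)] [FiberBundle ℂ L]
    (G : Subgroup (X ≃ₜ X)) : Prop :=
  Maximal (fun K : Subgroup (X ≃ₜ X) => K ≤ autGroup n L ∧ IsCompactConnected K) G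

/-- A smooth Hermitian metric on the line bundle `L`, given by the squared length of vectors. -/
structure HermitianMetric (n : ℕ) {X : Type*} [TopologicalSpace X] [ChartedSpace (Cn n) X]
    (L : X → Type*) [TopologicalSpace (TotalSpace ℂ L)] [∀ x, TopologicalSpace (L x)]
    [∀ x, AddCommGroup (L x)] [∀ x, Module ℂ (L x)] [FiberBundle ℂ L] [VectorBundle ℂ ℂ L] where
  normSq : ∀ x, L x → ℝ
  normSq_smul : ∀ x (c : ℂ) (v : L x), normSq x (c • v) = ‖c‖ ^ 2 * normSq x v
  normSq_pos : ∀ x (v : L x), v ≠ 0 → 0 < normSq x v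
  /-- The squared length of the local frames of `L` is smooth. -/
  smooth : ∀ x, ContMDiffOn 𝓘(ℝ, Cn n) 𝓘(ℝ, ℝ) ∞
    (fun y => normSq y ((trivializationAt ℂ L x).symm y 1)) (trivializationAt ℂ L x).baseSet

variable {L} [VectorBundle ℂ ℂ L] (h : HermitianMetric n L)

namespace HermitianMetric

/-- The domain of the preferred chart at `x` and of the preferred frame of `L` near `x`. -/
def chartDomain (_h : HermitianMetric n L) (x : X) : Set X :=
  (chartAt (Cn n) x).source ∩ (trivializationAt ℂ L x).baseSet

/-- The local weight `-log |s|²_h` of `h`, for the preferred frame `s` of `L` near `x`. -/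
def weight (x y : X) : ℝ :=
  -Real.log (h.normSq y ((trivializationAt ℂ L x).symm y 1))

/-- The matrix `(g_{jk̄})` at the point with coordinates `z`, in the preferred chart at `x`, of the
form `ω_φ = ω + √-1 ∂∂̄φ = √-1 ∑ g_{jk̄} dz_j ∧ dz̄_k`, where `ω = -√-1 ∂∂̄ log h` is the curvature
form of `h`. -/
def metricMatrix (φ : X → ℝ) (x : X) (z : Cn n) : Matrix (Fin n) (Fin n) ℂ :=
  complexHessian (fun w => h.weight x ((chartAt (Cn n) x).symm w) +
    φ ((chartAt (Cn n) x).symm w)) z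

/-- The Riemannian metric `2 Re ∑ g_{jk̄} v_j w̄_k` of `ω_φ` in the preferred chart at `x`. -/
def localMetric (φ : X → ℝ) (x : X) (z v w : Cn n) : ℝ :=
  2 * (∑ j, ∑ k, h.metricMatrix φ x z j k * v j * starRingEnd ℂ (w k)).re

/-- The Riemannian metric `g_φ` of `ω_φ` on the tangent space at `x`. -/
def metric (φ : X → ℝ) (x : X) (v w : TangentSpace 𝓘(ℝ, Cn n) x) : ℝ :=
  h.localMetric φ x (chartAt (Cn n) x x) v w

/-- The 2-form `ω_φ = g_φ(J·, ·)`. -/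
def form (φ : X → ℝ) (x : X) (v w : TangentSpace 𝓘(ℝ, Cn n) x) : ℝ :=
  h.metric φ x (J v) w

/-- `σ*ω = ω` for all `σ` in `G`, where `ω` is the curvature form of `h`. -/
def FormInvariant (G : Subgroup (X ≃ₜ X)) : Prop :=
  ∀ σ ∈ G, ∀ (x : X) (v w : TangentSpace 𝓘(ℝ, Cn n) x),
    h.form 0 (σ x) (mfderiv 𝓘(ℝ, Cn n) 𝓘(ℝ, Cn n) σ x v) (mfderiv 𝓘(ℝ, Cn n) 𝓘(ℝ, Cn n) σ x w) =
      h.form 0 x v w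

/-- The space `ℋ` of Kähler potentials: smooth `φ` with `ω_φ > 0`. -/
def potentials : Set (X → ℝ) :=
  {φ | Smooth n φ ∧ ∀ x, (h.metricMatrix φ x (chartAt (Cn n) x x)).PosDef}

/-- The space `ℋ^G` of `G`-invariant Kähler potentials. -/
def invPotentials (G : Subgroup (X ≃ₜ X)) : Set (X → ℝ) :=
  {φ | φ ∈ h.potentials ∧ IsInvariant G φ}

/-- The scalar curvature `S(φ) = 2 ∑ g^{jk̄} R_{jk̄}` of `g_φ`, where
`R_{jk̄} = -∂²/∂z_j∂z̄_k log det g` is the Ricci curvature. -/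
def scalarCurvature (φ : X → ℝ) (x : X) : ℝ :=
  2 * ((h.metricMatrix φ x (chartAt (Cn n) x x))⁻¹ *
    -complexHessian (fun w => Real.log (h.metricMatrix φ x w).det.re)
      (chartAt (Cn n) x x)).trace.re

/-- `V = ∇_{g_φ} f`. -/
def IsGradient (φ f : X → ℝ) (V : VField n X) : Prop :=
  ∀ (x : X) (w : TangentSpace 𝓘(ℝ, Cn n) x),
    h.metric φ x (V x) w = (mfderiv 𝓘(ℝ, Cn n) 𝓘(ℝ, ℝ) f x w : ℝ)

/-- The components of `V` in the preferred chart at `x`. -/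
def _root_.KahlerPol.localField (V : VField n X) (x : X) (z : Cn n) : Cn n :=
  mfderiv 𝓘(ℝ, Cn n) 𝓘(ℝ, Cn n) (chartAt (Cn n) x) ((chartAt (Cn n) x).symm z)
    (V ((chartAt (Cn n) x).symm z))

/-- `V` is a Killing vector field of `g_φ`: the Lie derivative of `g_φ` along `V`, written in
coordinates, vanishes. -/
def IsKilling (φ : X → ℝ) (V : VField n X) : Prop :=
  ∀ (x : X) (v w : Cn n),
    fderiv ℝ (fun z => h.localMetric φ x z v w) (chartAt (Cn n) x x)
        (localField V x (chartAt (Cn n) x x)) +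
      h.localMetric φ x (chartAt (Cn n) x x)
        (fderiv ℝ (localField V x) (chartAt (Cn n) x x) v) w +
      h.localMetric φ x (chartAt (Cn n) x x) v
        (fderiv ℝ (localField V x) (chartAt (Cn n) x x) w) = 0

variable [CompactSpace X] [T2Space X]

theorem exists_partition : ∃ ρ : PartitionOfUnity X X Set.univ, ρ.IsSubordinate h.chartDomain :=
  PartitionOfUnity.exists_isSubordinate isClosed_univ _
    (fun x => (chartAt (Cn n) x).open_source.inter (trivializationAt ℂ L x).open_baseSet)
    (fun x _ => Set.mem_iUnion.2
      ⟨x, mem_chart_source (Cn n) x, FiberBundle.mem_baseSet_trivializationAt' x⟩)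

/-- A partition of unity subordinate to the domains of the preferred charts and frames. -/
def partition : PartitionOfUnity X X Set.univ := h.exists_partition.choose

variable [MeasurableSpace X]

/-- The volume measure `dμ_φ = ω_φⁿ/n!` of `g_φ`, whose density in the chart at `x` with respect to
Lebesgue measure is `2ⁿ det(g_{jk̄})`; the local measures are glued with a partition of unity. -/
def volume (φ : X → ℝ) : Measure X :=
  Measure.sum fun x =>
    Measure.map (chartAt (Cn n) x).symm
      ((MeasureTheory.volume.restrict (chartAt (Cn n) x).target).withDensity fun z =>
        ENNReal.ofReal (h.partition x ((chartAt (Cn n) x).symm z) *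
          (2 ^ n * (h.metricMatrix φ x z).det.re)))

/-- The mean value of the scalar curvature of `g_φ`. -/
def meanScalar (φ : X → ℝ) : ℝ := ⨍ x, h.scalarCurvature φ x ∂(h.volume φ)

/-- The space `P^G_φ` of the Killing potentials of `g_φ` of mean value zero whose Hamiltonian vector
field `J∇f` lies in the Lie algebra of `G`. -/
def killingPotentials (G : Subgroup (X ≃ₜ X)) (φ : X → ℝ) : Set (X → ℝ) :=
  {f | Smooth n f ∧ ∫ x, f x ∂(h.volume φ) = 0 ∧
    ∃ V : VField n X, h.IsGradient φ f V ∧ h.IsKilling φ (fun x => J (V x)) ∧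
      (fun x => J (V x)) ∈ lieAlg G}

/-- `f` is the orthogonal projection of `u` to `P^G_φ`, for the inner product of `L²(dμ_φ)`. -/
def IsKillingProjection (G : Subgroup (X ≃ₜ X)) (φ u f : X → ℝ) : Prop :=
  f ∈ h.killingPotentials G φ ∧ ∀ p ∈ h.killingPotentials G φ,
    ∫ x, u x * p x ∂(h.volume φ) = ∫ x, f x * p x ∂(h.volume φ)

open Classical in
/-- The orthogonal projection `Π^G_φ u` of `u` to `P^G_φ`. -/
def killingProjection (G : Subgroup (X ≃ₜ X)) (φ u : X → ℝ) : X → ℝ :=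
  if H : ∃ f, h.IsKillingProjection G φ u f then H.choose else 0

/-- The reduced scalar curvature `S^G(φ) = S(φ) - S̄ - Π^G_φ S(φ)`. -/
def reducedScalar (G : Subgroup (X ≃ₜ X)) (φ : X → ℝ) (x : X) : ℝ :=
  h.scalarCurvature φ x - h.meanScalar φ - h.killingProjection G φ (h.scalarCurvature φ) x

/-- `V` is the extremal vector field `V^G` relative to `G`: it satisfies `V = ∇_{g_φ}(Π^G_φ S(φ))`
for any `φ ∈ ℋ^G`. The first conjunct says that `Π^G_φ S(φ)` is not a default value. -/
def IsExtremalField (G : Subgroup (X ≃ₜ X)) (V : VField n X) : Prop :=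
  ∀ φ ∈ h.invPotentials G,
    h.IsKillingProjection G φ (h.scalarCurvature φ)
      (h.killingProjection G φ (h.scalarCurvature φ)) ∧
    h.IsGradient φ (h.killingProjection G φ (h.scalarCurvature φ)) V

/-- `E` is a modified K-energy relative to `G`, i.e. a primitive on `ℋ^G` of the one-form
`φ ↦ -S^G(φ) dμ_φ`. Only the values of `E` on `ℋ^G` matter. -/
def IsModifiedKEnergy (G : Subgroup (X ≃ₜ X)) (E : (X → ℝ) → ℝ) : Prop :=
  ∀ φ ∈ h.invPotentials G, ∀ ψ : X → ℝ, Smooth n ψ → IsInvariant G ψ →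
    HasDerivWithinAt (fun t : ℝ => E (φ + t • ψ))
      (-∫ x, ψ x * h.reducedScalar G φ x ∂(h.volume φ))
      {t : ℝ | φ + t • ψ ∈ h.invPotentials G} 0

end HermitianMetric

end Bundle

end KahlerPol

end

noncomputable section

namespace KahlerPol

section Model

variable {n : ℕ}

theorem contDiffAt_dz {j : Fin n} {F : Cn n → ℂ} {z : Cn n} (hF : ContDiffAt ℝ ∞ F z) :
    ContDiffAt ℝ ∞ (dz j F) z := by
  have h1 : ContDiffAt ℝ ∞ (fderiv ℝ F) z := hF.fderiv_right (by simp)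
  unfold dz
  exact contDiffAt_const.mul ((h1.clm_apply contDiffAt_const).sub
    (contDiffAt_const.mul (h1.clm_apply contDiffAt_const)))

theorem contDiffAt_dzbar {j : Fin n} {F : Cn n → ℂ} {z : Cn n} (hF : ContDiffAt ℝ ∞ F z) :
    ContDiffAt ℝ ∞ (dzbar j F) z := by
  have h1 : ContDiffAt ℝ ∞ (fderiv ℝ F) z := hF.fderiv_right (by simp)
  unfold dzbar
  exact contDiffAt_const.mul ((h1.clm_apply contDiffAt_const).add
    (contDiffAt_const.mul (h1.clm_apply contDiffAt_const)))

theorem contDiffAt_ofReal {F : Cn n → ℝ} {z : Cn n} (hF : ContDiffAt ℝ ∞ F z) :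
    ContDiffAt ℝ ∞ (fun w => (F w : ℂ)) z :=
  Complex.ofRealCLM.contDiff.contDiffAt.comp z hF

theorem continuousAt_complexHessian {F : Cn n → ℝ} {z : Cn n} (hF : ContDiffAt ℝ ∞ F z) :
    ContinuousAt (complexHessian F) z := by
  refine continuousAt_pi.2 fun j => continuousAt_pi.2 fun k => ?_
  exact (contDiffAt_dz (contDiffAt_dzbar (contDiffAt_ofReal hF))).continuousAt

theorem dz_congr {j : Fin n} {F G : Cn n → ℂ} {z : Cn n} (hFG : F =ᶠ[nhds z] G) :
    dz j F z = dz j G z := by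
  simp only [dz, hFG.fderiv_eq]

theorem dz_combination {j : Fin n} {F G : Cn n → ℂ} {z : Cn n} (a b : ℂ)
    (hF : DifferentiableAt ℝ F z) (hG : DifferentiableAt ℝ G z) :
    dz j (fun w => a * F w + b * G w) z = a * dz j F z + b * dz j G z := by
  have := ((hF.hasFDerivAt.const_mul a).add (hG.hasFDerivAt.const_mul b)).fderiv
  simp only [dz]
  erw [this]
  simp only [add_apply, smul_apply, smul_eq_mul]
  ring

theorem dzbar_combination {j : Fin n} {F G : Cn n → ℂ} {z : Cn n} (a b : ℂ)
    (hF : DifferentiableAt ℝ F z) (hG : DifferentiableAt ℝ G z) :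
    dzbar j (fun w => a * F w + b * G w) z = a * dzbar j F z + b * dzbar j G z := by
  have := ((hF.hasFDerivAt.const_mul a).add (hG.hasFDerivAt.const_mul b)).fderiv
  simp only [dzbar]
  erw [this]
  simp only [add_apply, smul_apply, smul_eq_mul]
  ring

theorem complexHessian_combination {F G : Cn n → ℝ} {z : Cn n} (a b : ℝ)
    (hF : ContDiffAt ℝ ∞ F z) (hG : ContDiffAt ℝ ∞ G z) :
    complexHessian (fun w => a * F w + b * G w) z =
      (a : ℂ) • complexHessian F z + (b : ℂ) • complexHessian G z := by
  ext j k
  have hF' := contDiffAt_ofReal hF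
  have hG' := contDiffAt_ofReal hG
  have hev : ∀ {H : Cn n → ℂ}, ContDiffAt ℝ ∞ H z → ∀ᶠ w in nhds z, DifferentiableAt ℝ H w := by
    intro H hH
    filter_upwards [(hH.of_le (m := 1) (by exact_mod_cast le_top)).eventually (by simp)] with w hw
    exact hw.differentiableAt (by simp)
  have hbar : dzbar k (fun w => ((a * F w + b * G w : ℝ) : ℂ)) =ᶠ[nhds z]
      fun w => (a : ℂ) * dzbar k (fun w => (F w : ℂ)) w + b * dzbar k (fun w => (G w : ℂ)) w := by
    filter_upwards [hev hF', hev hG'] with w hw hw'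
    rw [← dzbar_combination _ _ hw hw']
    simp only [Complex.ofReal_add, Complex.ofReal_mul]
  simp only [complexHessian, Matrix.of_apply, Matrix.add_apply, Matrix.smul_apply, smul_eq_mul]
  rw [dz_congr hbar, dz_combination _ _ (hev (contDiffAt_dzbar hF')).self_of_nhds
    (hev (contDiffAt_dzbar hG')).self_of_nhds]

end Model

section Manifold

variable {n : ℕ} {X : Type*} [TopologicalSpace X] [ChartedSpace (Cn n) X]

/-- The smooth manifold underlying a complex manifold. -/
theorem isManifold_real [IsManifold 𝓘(ℂ, Cn n) ω X] : IsManifold 𝓘(ℝ, Cn n) ∞ X := by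
  refine isManifold_of_contDiffOn _ _ _ fun e e' he he' => ?_
  have h := (contDiffGroupoid ω 𝓘(ℂ, Cn n)).compatible he he'
  rw [contDiffGroupoid, mem_groupoid_of_pregroupoid] at h
  replace h := h.1
  simp only [contDiffPregroupoid] at h
  simp only [modelWithCornersSelf_coe, modelWithCornersSelf_coe_symm, Function.comp_id,
    Function.id_comp, Set.range_id, Set.inter_univ, Set.preimage_id] at h ⊢
  exact (h.restrict_scalars ℝ).of_le le_top

theorem contDiffAt_comp_chartAt_symm [IsManifold 𝓘(ℂ, Cn n) ω X] {f : X → ℝ} {s : Set X}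
    (hs : IsOpen s) (hf : ContMDiffOn 𝓘(ℝ, Cn n) 𝓘(ℝ, ℝ) ∞ f s) {x : X} {z : Cn n}
    (hz : z ∈ (chartAt (Cn n) x).target) (hzs : (chartAt (Cn n) x).symm z ∈ s) :
    ContDiffAt ℝ ∞ (fun w => f ((chartAt (Cn n) x).symm w)) z := by
  have : IsManifold 𝓘(ℝ, Cn n) ∞ X := isManifold_real
  rw [← contMDiffAt_iff_contDiffAt]
  exact (hf.contMDiffAt (hs.mem_nhds hzs)).comp z
    ((contMDiffOn_chart_symm (I := 𝓘(ℝ, Cn n)) (n := ∞)).contMDiffAt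
      ((chartAt (Cn n) x).open_target.mem_nhds hz))

theorem lieAlg_mono {G K : Subgroup (X ≃ₜ X)} (hGK : G ≤ K) :
    lieAlg (n := n) G ⊆ lieAlg K :=
  fun _ ⟨γ, hγ, hrest⟩ => ⟨γ, fun t => hGK (hγ t), hrest⟩

end Manifold

namespace HermitianMetric

variable {n : ℕ} {X : Type*} [TopologicalSpace X] [ChartedSpace (Cn n) X]
  {L : X → Type*} [TopologicalSpace (TotalSpace ℂ L)] [∀ x, TopologicalSpace (L x)]
  [∀ x, AddCommGroup (L x)] [∀ x, Module ℂ (L x)] [FiberBundle ℂ L] [VectorBundle ℂ ℂ L]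
  (h : HermitianMetric n L)

theorem contMDiffOn_weight (x : X) :
    ContMDiffOn 𝓘(ℝ, Cn n) 𝓘(ℝ, ℝ) ∞ (h.weight x) (trivializationAt ℂ L x).baseSet := by
  intro y hy
  have hne : (trivializationAt ℂ L x).symm y (1 : ℂ) ≠ 0 := by
    intro h0
    have h1 := (trivializationAt ℂ L x).apply_mk_symm hy (1 : ℂ)
    have h2 := (trivializationAt ℂ L x).zeroSection ℂ hy
    rw [h0] at h1
    have := congrArg Prod.snd (h1.symm.trans h2)
    exact one_ne_zero this
  have hpos := h.normSq_pos y _ hne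
  exact ContMDiffAt.comp_contMDiffWithinAt (g := fun r : ℝ => -Real.log r) y
    (Real.contDiffAt_log.2 hpos.ne').neg.contMDiffAt (h.smooth x y hy)

theorem contDiffAt_weight_add [IsManifold 𝓘(ℂ, Cn n) ω X] {φ : X → ℝ} (hφ : Smooth n φ) {x : X}
    {z : Cn n} (hz : z ∈ (chartAt (Cn n) x).target)
    (hzL : (chartAt (Cn n) x).symm z ∈ (trivializationAt ℂ L x).baseSet) :
    ContDiffAt ℝ ∞ (fun w => h.weight x ((chartAt (Cn n) x).symm w) +
      φ ((chartAt (Cn n) x).symm w)) z :=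
  (contDiffAt_comp_chartAt_symm (trivializationAt ℂ L x).open_baseSet
      (h.contMDiffOn_weight x) hz hzL).add
    (contDiffAt_comp_chartAt_symm isOpen_univ hφ.contMDiffOn hz (Set.mem_univ _))

theorem metricMatrix_combination [IsManifold 𝓘(ℂ, Cn n) ω X] {φ ψ : X → ℝ}
    (hφ : Smooth n φ) (hψ : Smooth n ψ) {a b : ℝ} (hab : a + b = 1) (x : X) :
    h.metricMatrix (a • φ + b • ψ) x (chartAt (Cn n) x x) =
      (a : ℂ) • h.metricMatrix φ x (chartAt (Cn n) x x) +
        (b : ℂ) • h.metricMatrix ψ x (chartAt (Cn n) x x) := by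
  have hz := mem_chart_target (Cn n) x
  have hzL : (chartAt (Cn n) x).symm (chartAt (Cn n) x x) ∈ (trivializationAt ℂ L x).baseSet := by
    rw [(chartAt (Cn n) x).left_inv (mem_chart_source _ x)]
    exact FiberBundle.mem_baseSet_trivializationAt' x
  simp only [metricMatrix]
  rw [← complexHessian_combination a b (h.contDiffAt_weight_add hφ hz hzL)
    (h.contDiffAt_weight_add hψ hz hzL)]
  congr 1
  funext w
  obtain rfl : a = 1 - b := by linarith
  simp only [Pi.add_apply, Pi.smul_apply, smul_eq_mul]
  ring

theorem convex_potentials [IsManifold 𝓘(ℂ, Cn n) ω X] : Convex ℝ h.potentials := by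
  rw [convex_iff_forall_pos]
  intro φ hφ ψ hψ a b ha hb hab
  have hsmul : ∀ (c : ℝ) {η : X → ℝ}, Smooth n η → Smooth n (c • η) := fun c _ hη =>
    (contDiff_const_smul c).contMDiff.comp hη
  refine ⟨ContMDiff.add (hsmul a hφ.1) (hsmul b hψ.1), fun x => ?_⟩
  rw [h.metricMatrix_combination hφ.1 hψ.1 hab]
  exact ((hφ.2 x).smul (by exact_mod_cast ha)).add ((hψ.2 x).smul (by exact_mod_cast hb))

theorem convex_invPotentials [IsManifold 𝓘(ℂ, Cn n) ω X] (G : Subgroup (X ≃ₜ X)) :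
    Convex ℝ (h.invPotentials G) := by
  intro φ hφ ψ hψ a b ha hb hab
  refine ⟨h.convex_potentials hφ.1 hψ.1 ha hb hab, fun σ hσ x => ?_⟩
  simp only [Pi.add_apply, Pi.smul_apply, hφ.2 σ hσ x, hψ.2 σ hσ x]

theorem invPotentials_anti {G K : Subgroup (X ≃ₜ X)} (hGK : G ≤ K) :
    h.invPotentials K ⊆ h.invPotentials G :=
  fun _ hφ => ⟨hφ.1, fun σ hσ => hφ.2 σ (hGK hσ)⟩

theorem gradient_unique {φ f : X → ℝ} (hφ : φ ∈ h.potentials) {V W : VField n X}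
    (hV : h.IsGradient φ f V) (hW : h.IsGradient φ f W) : V = W := by
  funext x
  by_contra hne
  have hne' : (star (show Cn n from V x) - star (show Cn n from W x) : Cn n) ≠ 0 := by
    intro h0
    exact hne (star_injective (R := Cn n) (sub_eq_zero.1 h0))
  have hpd := (hφ.2 x).re_dotProduct_pos hne'
  have e1 := (hV x (V x - W x)).trans (hW x (V x - W x)).symm
  simp only [metric, localMetric] at e1
  refine hpd.ne' ?_
  rw [← sub_eq_zero, ← mul_sub, ← Complex.sub_re] at e1
  have e2 := (mul_eq_zero.1 e1).resolve_left two_ne_zero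
  refine Eq.trans ?_ e2
  simp only [dotProduct, Matrix.mulVec, ← Finset.sum_sub_distrib, Finset.mul_sum]
  refine congrArg Complex.re (Finset.sum_congr rfl fun j _ => Finset.sum_congr rfl fun k _ => ?_)
  change star (star ((V x : Cn n) j) - star ((W x : Cn n) j)) * (_ *
    (star ((V x : Cn n) k) - star ((W x : Cn n) k))) =
    _ * (V x : Cn n) j * star ((V x : Cn n) k - (W x : Cn n) k) -
    _ * (W x : Cn n) j * star ((V x : Cn n) k - (W x : Cn n) k)
  simp only [star_sub, star_star]
  ring

variable [CompactSpace X] [T2Space X] [MeasurableSpace X]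

theorem killingPotentials_mono {G K : Subgroup (X ≃ₜ X)} (hGK : G ≤ K) (φ : X → ℝ) :
    h.killingPotentials G φ ⊆ h.killingPotentials K φ :=
  fun _ ⟨hf, h0, V, hV, hK, hl⟩ => ⟨hf, h0, V, hV, hK, lieAlg_mono hGK hl⟩

theorem isKillingProjection_of_le {G K : Subgroup (X ≃ₜ X)} (hGK : G ≤ K) {φ u f : X → ℝ}
    (hφ : φ ∈ h.potentials) (hf : h.IsKillingProjection K φ u f) {V : VField n X}
    (hV : h.IsGradient φ f V) (hJV : (fun x => J (V x)) ∈ lieAlg G) :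
    h.IsKillingProjection G φ u f := by
  obtain ⟨⟨hs, h0, W, hW, hK, -⟩, hp⟩ := hf
  obtain rfl := h.gradient_unique hφ hW hV
  exact ⟨⟨hs, h0, W, hW, hK, hJV⟩, fun p hpG => hp p (h.killingPotentials_mono hGK φ hpG)⟩

theorem isKillingProjection_killingProjection {G : Subgroup (X ≃ₜ X)} {φ u f : X → ℝ}
    (hf : h.IsKillingProjection G φ u f) :
    h.IsKillingProjection G φ u (h.killingProjection G φ u) := by
  have H : ∃ f, h.IsKillingProjection G φ u f := ⟨f, hf⟩
  rw [killingProjection, dif_pos H]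
  exact H.choose_spec

theorem isFiniteMeasure_volume [IsManifold 𝓘(ℂ, Cn n) ω X] {φ : X → ℝ} (hφ : Smooth n φ) :
    IsFiniteMeasure (h.volume φ) := by
  have hsub : ∀ x, tsupport (h.partition x) ⊆ h.chartDomain x := h.exists_partition.choose_spec
  set ν : X → Measure (Cn n) := fun x =>
    (MeasureTheory.volume.restrict (chartAt (Cn n) x).target).withDensity fun z =>
      ENNReal.ofReal (h.partition x ((chartAt (Cn n) x).symm z) *
        (2 ^ n * (h.metricMatrix φ x z).det.re)) with hν
  have hle : ∀ x, Measure.map (chartAt (Cn n) x).symm (ν x) Set.univ ≤ ν x Set.univ := by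
    intro x
    by_cases hm : AEMeasurable (chartAt (Cn n) x).symm (ν x)
    · rw [Measure.map_apply_of_aemeasurable hm MeasurableSet.univ, Set.preimage_univ]
    · rw [Measure.map_of_not_aemeasurable hm]
      simp
  have hzero : ∀ x, (Function.support (h.partition x)) = ∅ → ν x Set.univ = 0 := by
    intro x hx
    have : ∀ y, h.partition x y = 0 := fun y => by
      by_contra hy
      exact (Set.eq_empty_iff_forall_notMem.1 hx) y hy
    simp [hν, this]
  have hfin : ∀ x, ν x Set.univ < ⊤ := by
    intro x
    set e := chartAt (Cn n) x
    have hts : tsupport (h.partition x) ⊆ e.source := (hsub x).trans Set.inter_subset_left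
    set K : Set (Cn n) := e '' tsupport (h.partition x)
    have hK : IsCompact K :=
      (isClosed_tsupport _).isCompact.image_of_continuousOn (e.continuousOn.mono hts)
    have hcont : ContinuousOn (fun z => (2 ^ n * (h.metricMatrix φ x z).det.re : ℝ)) K := by
      rintro _ ⟨y, hy, rfl⟩
      refine ContinuousAt.continuousWithinAt ?_
      have hc : ContinuousAt (h.metricMatrix φ x) (e y) := by
        refine continuousAt_complexHessian (h.contDiffAt_weight_add hφ (e.map_source (hts hy)) ?_)
        rw [e.left_inv (hts hy)]
        exact (hsub x hy).2
      exact continuousAt_const.mul (Complex.continuous_re.continuousAt.comp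
        ((Continuous.matrix_det continuous_id).continuousAt.comp hc))
    obtain ⟨C, hC⟩ := hK.exists_bound_of_continuousOn hcont
    rw [hν]
    simp only [withDensity_apply _ MeasurableSet.univ, Measure.restrict_univ]
    calc _ ≤ ∫⁻ z in e.target, K.indicator (fun _ => ENNReal.ofReal C) z := by
          refine setLIntegral_mono' e.open_target.measurableSet fun z hz => ?_
          by_cases hy : e.symm z ∈ tsupport (h.partition x)
          · have hzK : z ∈ K := ⟨e.symm z, hy, e.right_inv hz⟩
            rw [Set.indicator_of_mem hzK]
            refine ENNReal.ofReal_le_ofReal ?_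
            have h0 := h.partition.nonneg x (e.symm z)
            have h1 := h.partition.le_one x (e.symm z)
            have h2 := hC z hzK
            rw [Real.norm_eq_abs] at h2
            calc _ ≤ h.partition x (e.symm z) * |2 ^ n * (h.metricMatrix φ x z).det.re| :=
                  mul_le_mul_of_nonneg_left (le_abs_self _) h0
              _ ≤ 1 * |2 ^ n * (h.metricMatrix φ x z).det.re| :=
                  mul_le_mul_of_nonneg_right h1 (abs_nonneg _)
              _ ≤ C := by rwa [one_mul]
          · rw [image_eq_zero_of_notMem_tsupport hy]
            simp
      _ ≤ ∫⁻ z, K.indicator (fun _ => ENNReal.ofReal C) z := setLIntegral_le_lintegral _ _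
      _ = ENNReal.ofReal C * MeasureTheory.volume K := by
          rw [lintegral_indicator_const hK.measurableSet]
      _ < ⊤ := ENNReal.mul_lt_top ENNReal.ofReal_lt_top hK.measure_lt_top
  have hF := h.partition.locallyFinite.finite_nonempty_of_compact
  refine ⟨?_⟩
  rw [volume, Measure.sum_apply _ MeasurableSet.univ]
  refine (ENNReal.tsum_le_tsum hle).trans_lt ?_
  rw [tsum_eq_sum (s := hF.toFinset) fun x hx => hzero x ?_]
  · exact ENNReal.sum_lt_top.2 fun x _ => hfin x
  · simpa [Set.not_nonempty_iff_eq_empty] using hx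

theorem isKillingProjection_ae_unique [IsManifold 𝓘(ℂ, Cn n) ω X] [BorelSpace X]
    {G : Subgroup (X ≃ₜ X)} {φ u f g : X → ℝ} (hφ : Smooth n φ)
    (hf : h.IsKillingProjection G φ u f) (hg : h.IsKillingProjection G φ u g) :
    f =ᵐ[h.volume φ] g := by
  have := h.isFiniteMeasure_volume hφ
  have hfc : Continuous f := ContMDiff.continuous hf.1.1
  have hgc : Continuous g := ContMDiff.continuous hg.1.1
  have hint : ∀ {k : X → ℝ}, Continuous k → Integrable k (h.volume φ) := fun hk =>
    hk.integrable_of_hasCompactSupport (HasCompactSupport.of_compactSpace _)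
  have e1 : ∫ x, f x * f x ∂(h.volume φ) = ∫ x, g x * f x ∂(h.volume φ) :=
    (hf.2 f hf.1).symm.trans (hg.2 f hf.1)
  have e2 : ∫ x, f x * g x ∂(h.volume φ) = ∫ x, g x * g x ∂(h.volume φ) :=
    (hf.2 g hg.1).symm.trans (hg.2 g hg.1)
  have e3 : ∫ x, (f x - g x) ^ 2 ∂(h.volume φ) = 0 := by
    have : (fun x => (f x - g x) ^ 2) =
        fun x => (f x * f x - g x * f x) - (f x * g x - g x * g x) := by
      funext x; ring
    rw [this, integral_sub (hint (by fun_prop)) (hint (by fun_prop)),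
      integral_sub (hint (by fun_prop)) (hint (by fun_prop)),
      integral_sub (hint (by fun_prop)) (hint (by fun_prop)), e1, e2]
    ring
  rw [integral_eq_zero_iff_of_nonneg (fun x => sq_nonneg _)
    (hint (k := fun x => (f x - g x) ^ 2) ((hfc.sub hgc).pow 2))] at e3
  filter_upwards [e3] with x hx
  exact sub_eq_zero.1 (pow_eq_zero_iff two_ne_zero |>.1 hx)

/-- If the extremal field relative to `K` generates a one-parameter subgroup of `G ≤ K`, then the
reduced scalar curvatures relative to `K` and to `G` agree on `ℋ^K`. -/
theorem reducedScalar_ae_eq [IsManifold 𝓘(ℂ, Cn n) ω X] [BorelSpace X]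
    {G K : Subgroup (X ≃ₜ X)} (hGK : G ≤ K) {V : VField n X} (hV : h.IsExtremalField K V)
    (hJV : (fun x => J (V x)) ∈ lieAlg G) {φ : X → ℝ} (hφ : φ ∈ h.invPotentials K) :
    h.reducedScalar K φ =ᵐ[h.volume φ] h.reducedScalar G φ := by
  obtain ⟨hproj, hgrad⟩ := hV φ hφ
  have hG := h.isKillingProjection_of_le hGK hφ.1 hproj hgrad hJV
  filter_upwards [h.isKillingProjection_ae_unique hφ.1.1 hG
    (h.isKillingProjection_killingProjection hG)] with x hx
  simp only [reducedScalar, hx]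

theorem modifiedKEnergy_sub_eq [IsManifold 𝓘(ℂ, Cn n) ω X] [BorelSpace X]
    {G K : Subgroup (X ≃ₜ X)} (hGK : G ≤ K) {V : VField n X} (hV : h.IsExtremalField K V)
    (hJV : (fun x => J (V x)) ∈ lieAlg G) {EK EG : (X → ℝ) → ℝ}
    (hEK : h.IsModifiedKEnergy K EK) (hEG : h.IsModifiedKEnergy G EG) {φ ψ : X → ℝ}
    (hφ : φ ∈ h.invPotentials K) (hψ : ψ ∈ h.invPotentials K) :
    EK ψ - EG ψ = EK φ - EG φ := by
  set η : X → ℝ := ψ - φ with hη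
  have hηs : Smooth n η := ContMDiff.sub hψ.1.1 hφ.1.1
  have hηi : IsInvariant K η := fun σ hσ x => by
    simp only [hη, Pi.sub_apply, hψ.2 σ hσ x, hφ.2 σ hσ x]
  have hmem : ∀ t ∈ Set.Icc (0 : ℝ) 1, φ + t • η ∈ h.invPotentials K := fun t ht =>
    (h.convex_invPotentials K).add_smul_sub_mem hφ hψ ht
  have hd : ∀ t ∈ Set.Icc (0 : ℝ) 1,
      HasDerivWithinAt (fun s : ℝ => EK (φ + s • η) - EG (φ + s • η)) 0 (Set.Icc 0 1) t := by
    intro t ht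
    have hK := hEK _ (hmem t ht) η hηs hηi
    have hG := hEG _ (h.invPotentials_anti hGK (hmem t ht)) η hηs fun σ hσ => hηi σ (hGK hσ)
    have heq : ∫ x, η x * h.reducedScalar K (φ + t • η) x ∂(h.volume (φ + t • η)) =
        ∫ x, η x * h.reducedScalar G (φ + t • η) x ∂(h.volume (φ + t • η)) := by
      refine integral_congr_ae ?_
      filter_upwards [h.reducedScalar_ae_eq hGK hV hJV (hmem t ht)] with x hx
      rw [hx]
    have hD := hK.sub (hG.mono fun s hs => h.invPotentials_anti hGK hs)
    rw [heq, sub_self] at hD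
    have hshift : HasDerivWithinAt (fun s : ℝ => s - t) 1 (Set.Icc 0 1) t :=
      ((hasDerivAt_id t).sub_const t).hasDerivWithinAt
    have hsmul : ∀ s : ℝ, φ + t • η + (s - t) • η = φ + s • η := fun s => by
      rw [add_assoc, ← add_smul, add_sub_cancel]
    have hcomp := HasDerivWithinAt.scomp_of_eq t hD hshift
      (fun s hs => by simpa only [Set.mem_ofPred_eq, hsmul] using hmem s hs) (sub_self t).symm
    simpa only [Function.comp_def, Pi.sub_apply, hsmul, smul_zero] using hcomp
  have hconst := constant_of_derivWithin_zero (fun t ht => (hd t ht).differentiableWithinAt)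
    (fun t ht => (hd t (Set.Ico_subset_Icc_self ht)).derivWithin
      (uniqueDiffOn_Icc zero_lt_one t (Set.Ico_subset_Icc_self ht))) 1 (by simp)
  simpa [hη] using hconst

end HermitianMetric

end KahlerPol

end

theorem modified_K_energies_agree_on_invariant_potentials
    {n : ℕ} {X : Type*} [TopologicalSpace X] [ChartedSpace (KahlerPol.Cn n) X]
    [IsManifold 𝓘(ℂ, KahlerPol.Cn n) ω X] [CompactSpace X] [T2Space X] [ConnectedSpace X]
    [MeasurableSpace X] [BorelSpace X]
    (L : X → Type*) [TopologicalSpace (TotalSpace ℂ L)] [∀ x, TopologicalSpace (L x)]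
    [∀ x, AddCommGroup (L x)] [∀ x, Module ℂ (L x)] [FiberBundle ℂ L] [VectorBundle ℂ ℂ L]
    [ContMDiffVectorBundle ω ℂ L 𝓘(ℂ, KahlerPol.Cn n)]
    -- the Kähler form `ω ∈ c₁(L)`: the curvature form of a positively curved metric `h` on `L`
    (h : KahlerPol.HermitianMetric n L) (hpos : 0 ∈ h.potentials)
    (Gm G : Subgroup (X ≃ₜ X))
    (hGm : KahlerPol.IsMaximalCompactConnected n L Gm)
    (hG : KahlerPol.IsCompactConnected G) (hGGm : G ≤ Gm)
    (hinv : h.FormInvariant Gm)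
    (V : KahlerPol.VField n X) (hV : h.IsExtremalField Gm V)
    (hJV : (fun x => KahlerPol.J (V x)) ∈ KahlerPol.lieAlg G)
    (EGm EG : (X → ℝ) → ℝ)
    (hEGm : h.IsModifiedKEnergy Gm EGm) (hEG : h.IsModifiedKEnergy G EG) :
    (∃ c : ℝ, ∀ φ ∈ h.invPotentials Gm, EGm φ = EG φ + c) ∧
      ∀ φ₀ ∈ h.invPotentials Gm, IsMinOn EG (h.invPotentials G) φ₀ →
        IsMinOn EGm (h.invPotentials Gm) φ₀ := by
  have hle := h.invPotentials_anti hGGm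
  have hc : ∀ φ ∈ h.invPotentials Gm, EGm φ = EG φ + (EGm 0 - EG 0) := fun φ hφ => by
    linarith [h.modifiedKEnergy_sub_eq hGGm hV hJV hEGm hEG
      (show (0 : X → ℝ) ∈ h.invPotentials Gm from ⟨hpos, fun _ _ _ => rfl⟩) hφ]
  refine ⟨⟨_, hc⟩, fun φ₀ hφ₀ hmin φ hφ => ?_⟩
  have := hmin (hle hφ)
  simp only [Set.mem_ofPred_eq] at this ⊢
  rw [hc φ₀ hφ₀, hc φ hφ]
  linarith
end
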